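/- Let f: K → ℝ be a function on the convex bodies of ℝ^n that is continuous with respect to the Hausdorff metric and invariant under all isometries of ℝ^n, and suppose f is a valuation: f(∅)=0 and f(K ∪ L) = f(K) + f(L) − f(K ∩ L) whenever K, L and K ∪ L are convex bodies. If moreover f is simple (vanishes on convex bodies of dimension < n), then f is a constant multiple of the n-dimensional Lebesgue volume. -/

import Mathlib

open MeasureTheory Metric Set Filter

/-- A convex body of `ℝ^n`: a nonempty compact convex set. -/
def IsConvexBody {n : ℕ} (K : Set (EuclideanSpace ℝ (Fin n))) : Prop :=
  K.Nonempty ∧ IsCompact K ∧ Convex ℝ K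

set_option linter.unusedSectionVars false

namespace Hadwiger

open scoped Pointwise RealInnerProductSpace Topology

section Basics
variable {E : Type} [NormedAddCommGroup E] [InnerProductSpace ℝ E] [FiniteDimensional ℝ E]

/-- Nonempty compact convex sets. -/
def Body (K : Set E) : Prop := K.Nonempty ∧ IsCompact K ∧ Convex ℝ K

/-- Two sets are within Hausdorff distance `ε`, elementary form. -/
def Close (ε : ℝ) (A B : Set E) : Prop :=
  (∀ x ∈ A, ∃ y ∈ B, dist x y ≤ ε) ∧ (∀ y ∈ B, ∃ x ∈ A, dist x y ≤ ε)

/-- Simple continuous isometry invariant valuations. -/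
structure Nice (f : Set E → ℝ) : Prop where
  empty : f ∅ = 0
  val : ∀ K L, Body K → Body L → Convex ℝ (K ∪ L) → f (K ∪ L) = f K + f L - f (K ∩ L)
  simple : ∀ K, Body K → ∀ (l : E →L[ℝ] ℝ) (c : ℝ), l ≠ 0 → (∀ x ∈ K, l x = c) → f K = 0
  cont : ∀ (K : ℕ → Set E) (L : Set E), (∀ m, Body (K m)) → Body L →
    (∀ ε > 0, ∀ᶠ m in atTop, Close ε (K m) L) → Tendsto (fun m => f (K m)) atTop (𝓝 (f L))
  inv : ∀ g : E ≃ₗᵢ[ℝ] E, ∀ K, Body K → f (g '' K) = f K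
  trans : ∀ (v : E) K, Body K → f ((fun x => v + x) '' K) = f K

/-- Functions on convex sets that are additive under hyperplane cuts. -/
structure Cut (q : Set E → ℝ) : Prop where
  empty : q ∅ = 0
  cut : ∀ K, IsCompact K → Convex ℝ K → ∀ (l : E →L[ℝ] ℝ) (c : ℝ), l ≠ 0 →
    q K = q (K ∩ {x | l x ≤ c}) + q (K ∩ {x | c ≤ l x})

/-- Compact finite intersections of half spaces. -/
def IsPoly (P : Set E) : Prop :=
  IsCompact P ∧ ∃ L : List ((E →L[ℝ] ℝ) × ℝ), P = {x | ∀ p ∈ L, p.1 x ≤ p.2}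

theorem Cut.simple {q : Set E → ℝ} (hq : Cut q) {K : Set E} (hK : IsCompact K) (hc : Convex ℝ K)
    {l : E →L[ℝ] ℝ} (hl : l ≠ 0) {c : ℝ} (h : ∀ x ∈ K, l x = c) : q K = 0 := by
  have := hq.cut K hK hc l c hl
  have h1 : K ∩ {x | l x ≤ c} = K := by
    ext x; simp only [mem_inter_iff, mem_ofPred_eq, and_iff_left_iff_imp]
    intro hx; exact (h x hx).le
  have h2 : K ∩ {x | c ≤ l x} = K := by
    ext x; simp only [mem_inter_iff, mem_ofPred_eq, and_iff_left_iff_imp]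
    intro hx; exact (h x hx).ge
  rw [h1, h2] at this
  linarith

theorem exists_functional (h : 0 < Module.finrank ℝ E) : ∃ l : E →L[ℝ] ℝ, l ≠ 0 := by
  have : Nontrivial E := Module.finrank_pos_iff.mp h
  obtain ⟨v, hv⟩ := exists_ne (0 : E)
  refine ⟨innerSL ℝ v, fun h => ?_⟩
  have := congrArg (fun l : E →L[ℝ] ℝ => l v) h
  simp at this
  exact hv this

theorem Cut.singleton {q : Set E → ℝ} (hq : Cut q) (h : 0 < Module.finrank ℝ E) (x : E) :
    q {x} = 0 := by
  obtain ⟨l, hl⟩ := exists_functional h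
  exact hq.simple isCompact_singleton (convex_singleton x) hl (c := l x) (by simp)

theorem convex_half (L : List ((E →L[ℝ] ℝ) × ℝ)) : Convex ℝ {x : E | ∀ p ∈ L, p.1 x ≤ p.2} := by
  have : {x : E | ∀ p ∈ L, p.1 x ≤ p.2} = ⋂ p ∈ L, {x : E | p.1 x ≤ p.2} := by
    ext; simp
  rw [this]
  refine convex_iInter₂ fun p _ => ?_
  exact convex_halfSpace_le p.1.isLinear p.2

theorem closed_half (L : List ((E →L[ℝ] ℝ) × ℝ)) : IsClosed {x : E | ∀ p ∈ L, p.1 x ≤ p.2} := by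
  have : {x : E | ∀ p ∈ L, p.1 x ≤ p.2} = ⋂ p ∈ L, {x : E | p.1 x ≤ p.2} := by
    ext; simp
  rw [this]
  refine isClosed_biInter fun p _ => ?_
  exact isClosed_le p.1.continuous continuous_const

/-- Sets described by far constraints `A`, near constraints `N`, homogeneous constraints `C`. -/
def X (A N C : List (E →L[ℝ] ℝ)) : Set E :=
  {x | (∀ a ∈ A, a x ≤ 1) ∧ (∀ b ∈ N, 1 ≤ b x) ∧ (∀ e ∈ C, 0 ≤ e x)}

theorem X_closed (A N C : List (E →L[ℝ] ℝ)) : IsClosed (X A N C) := by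
  have : X A N C = (⋂ a ∈ A, {x : E | a x ≤ 1}) ∩ ((⋂ b ∈ N, {x : E | 1 ≤ b x}) ∩
    (⋂ e ∈ C, {x : E | 0 ≤ e x})) := by
    ext; simp [X]
  rw [this]
  refine IsClosed.inter (isClosed_biInter fun p _ => ?_)
    (IsClosed.inter (isClosed_biInter fun p _ => ?_) (isClosed_biInter fun p _ => ?_))
  · exact isClosed_le p.continuous continuous_const
  · exact isClosed_le continuous_const p.continuous
  · exact isClosed_le continuous_const p.continuous

theorem X_convex (A N C : List (E →L[ℝ] ℝ)) : Convex ℝ (X A N C) := by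
  have : X A N C = (⋂ a ∈ A, {x : E | a x ≤ 1}) ∩ ((⋂ b ∈ N, {x : E | 1 ≤ b x}) ∩
    (⋂ e ∈ C, {x : E | 0 ≤ e x})) := by
    ext; simp [X]
  rw [this]
  refine Convex.inter (convex_iInter₂ fun p _ => ?_)
    (Convex.inter (convex_iInter₂ fun p _ => ?_) (convex_iInter₂ fun p _ => ?_))
  · exact convex_halfSpace_le p.isLinear _
  · exact convex_halfSpace_ge p.isLinear _
  · exact convex_halfSpace_ge p.isLinear _

theorem cone_compact {C : Set E} (hC : IsCompact C) (h : ∀ x ∈ C, ∀ t : ℝ, 0 ≤ t → t • x ∈ C)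
    {x : E} (hx : x ∈ C) : x = 0 := by
  obtain ⟨R, hR⟩ := hC.isBounded.exists_norm_le
  by_contra hne
  have hn : 0 < ‖x‖ := norm_pos_iff.mpr hne
  have hR0 : 0 ≤ R := (norm_nonneg x).trans (hR x hx)
  have := hR _ (h x hx ((R + 1) / ‖x‖) (by positivity))
  rw [norm_smul, Real.norm_eq_abs, abs_of_nonneg (by positivity), div_mul_cancel₀ _ hn.ne'] at this
  linarith

theorem reduceA {q : Set E → ℝ} (hq : Cut q) (hE : 0 < Module.finrank ℝ E)
    (h : ∀ (a : E →L[ℝ] ℝ) (C : List (E →L[ℝ] ℝ)), a ≠ 0 → IsCompact (X [a] [] C) →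
      q (X [a] [] C) = 0) :
    ∀ (k : ℕ) (A C : List (E →L[ℝ] ℝ)), A.length = k → IsCompact (X A [] C) →
      q (X A [] C) = 0 := by
  have hcone : ∀ C : List (E →L[ℝ] ℝ), IsCompact (X [] [] C) → q (X [] [] C) = 0 := by
    intro C hc
    have : X [] [] C = {0} := by
      ext x
      constructor
      · intro hx
        refine cone_compact hc ?_ hx
        intro y hy t ht
        simp only [X, List.not_mem_nil, false_imp_iff, implies_true, true_and, mem_ofPred_eq,
          map_smul, smul_eq_mul] at hy ⊢
        intro e he
        exact mul_nonneg ht (hy e he)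
      · rintro rfl
        simp [X]
    rw [this]
    exact hq.singleton hE 0
  intro k
  induction k using Nat.strong_induction_on with
  | _ k ih =>
  intro A C hA hc
  match A, hA with
  | [], _ => exact hcone C hc
  | [a], _ =>
    by_cases ha : a = 0
    · subst ha
      have : X [0] [] C = X [] [] C := by ext x; simp [X]
      rw [this] at hc ⊢
      exact hcone C hc
    · exact h a C ha hc
  | a :: a' :: A', hA =>
    simp only [List.length_cons] at hA
    by_cases haa : a = a'
    · subst haa
      have : X (a :: a :: A') [] C = X (a :: A') [] C := by ext x; simp [X]
      rw [this] at hc ⊢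
      exact ih (A'.length + 1) (by omega) _ _ (by simp) hc
    · have hl : a - a' ≠ 0 := sub_ne_zero.mpr haa
      rw [hq.cut _ hc (X_convex _ _ _) (a - a') 0 hl]
      have h1 : X (a :: a' :: A') [] C ∩ {x | (a - a') x ≤ 0} = X (a' :: A') [] ((a' - a) :: C) := by
        ext x
        simp only [X, List.mem_cons, forall_eq_or_imp, List.not_mem_nil, false_imp_iff, implies_true,
          true_and, mem_inter_iff, mem_ofPred_eq, _root_.sub_apply]
        constructor
        · rintro ⟨⟨⟨h1, h2, h3⟩, h4⟩, h5⟩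
          exact ⟨⟨h2, h3⟩, by linarith, h4⟩
        · rintro ⟨⟨h2, h3⟩, h5, h4⟩
          exact ⟨⟨⟨by linarith, h2, h3⟩, h4⟩, by linarith⟩
      have h2 : X (a :: a' :: A') [] C ∩ {x | 0 ≤ (a - a') x} = X (a :: A') [] ((a - a') :: C) := by
        ext x
        simp only [X, List.mem_cons, forall_eq_or_imp, List.not_mem_nil, false_imp_iff, implies_true,
          true_and, mem_inter_iff, mem_ofPred_eq, _root_.sub_apply]
        constructor
        · rintro ⟨⟨⟨h1, h2, h3⟩, h4⟩, h5⟩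
          exact ⟨⟨h1, h3⟩, by linarith, h4⟩
        · rintro ⟨⟨h2, h3⟩, h5, h4⟩
          exact ⟨⟨⟨h2, by linarith, h3⟩, h4⟩, by linarith⟩
      have c1 : IsCompact (X (a' :: A') [] ((a' - a) :: C)) := by
        rw [← h1]
        exact hc.inter_right (isClosed_le (a - a').continuous continuous_const)
      have c2 : IsCompact (X (a :: A') [] ((a - a') :: C)) := by
        rw [← h2]
        exact hc.inter_right (isClosed_le continuous_const (a - a').continuous)
      rw [h1, h2, ih (A'.length + 1) (by omega) _ _ (by simp) c1,
        ih (A'.length + 1) (by omega) _ _ (by simp) c2, add_zero]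

theorem reduceN {q : Set E → ℝ} (hq : Cut q)
    (h : ∀ (A C : List (E →L[ℝ] ℝ)), IsCompact (X A [] C) → q (X A [] C) = 0) :
    ∀ (N A C : List (E →L[ℝ] ℝ)), IsCompact (X A [] []) → q (X A N C) = 0 := by
  intro N
  induction N with
  | nil =>
    intro A C hA
    refine h A C (hA.of_isClosed_subset (X_closed _ _ _) ?_)
    intro x hx
    exact ⟨hx.1, by simp, by simp⟩
  | cons b N ih =>
    intro A C hA
    have hc : IsCompact (X A N C) := by
      refine hA.of_isClosed_subset (X_closed _ _ _) ?_
      intro x hx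
      exact ⟨hx.1, by simp, by simp⟩
    by_cases hb : b = 0
    · have : X A (b :: N) C = ∅ := by
        ext x
        simp [X, hb]
      rw [this, hq.empty]
    · have := hq.cut _ hc (X_convex _ _ _) b 1 hb
      have h1 : X A N C ∩ {x | b x ≤ 1} = X (b :: A) N C := by
        ext x; simp only [X, List.mem_cons, forall_eq_or_imp, mem_inter_iff, mem_ofPred_eq]; tauto
      have h2 : X A N C ∩ {x | 1 ≤ b x} = X A (b :: N) C := by
        ext x; simp only [X, List.mem_cons, forall_eq_or_imp, mem_inter_iff, mem_ofPred_eq]; tauto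
      rw [h1, h2, ih _ _ hA, ih _ _ ?_] at this
      · linarith
      · refine hA.of_isClosed_subset (X_closed _ _ _) ?_
        intro x hx
        exact ⟨fun a ha => hx.1 a (by simp [ha]), by simp, by simp⟩

/-- A bounding box. -/
theorem exists_box (R : ℝ) (hR : 0 < R) : ∃ A : List (E →L[ℝ] ℝ), IsCompact (X A [] []) ∧
    ∀ x : E, ‖x‖ ≤ R → x ∈ X A [] [] := by
  let b := stdOrthonormalBasis ℝ E
  let A : List (E →L[ℝ] ℝ) :=
    (Finset.univ.toList.map fun i => (R⁻¹ : ℝ) • innerSL ℝ (b i)) ++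
    (Finset.univ.toList.map fun i => (-R⁻¹ : ℝ) • innerSL ℝ (b i))
  have key : ∀ x : E, x ∈ X A [] [] ↔ ∀ i, |⟪b i, x⟫| ≤ R := by
    intro x
    simp only [X, A, List.mem_append, List.mem_map, Finset.mem_toList, Finset.mem_univ, true_and,
      List.not_mem_nil, false_imp_iff, implies_true, and_true, mem_ofPred_eq]
    constructor
    · intro h i
      have h1 := h _ (Or.inl ⟨i, rfl⟩)
      have h2 := h _ (Or.inr ⟨i, rfl⟩)
      simp only [_root_.smul_apply, innerSL_apply_apply, smul_eq_mul] at h1 h2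
      rw [abs_le]
      rw [inv_mul_le_iff₀ hR] at h1
      rw [neg_mul, ← mul_neg, inv_mul_le_iff₀ hR] at h2
      constructor <;> linarith
    · rintro h a (⟨i, rfl⟩ | ⟨i, rfl⟩) <;>
      simp only [_root_.smul_apply, innerSL_apply_apply, smul_eq_mul]
      · rw [inv_mul_le_iff₀ hR]; linarith [(abs_le.mp (h i)).2]
      · rw [neg_mul, ← mul_neg, inv_mul_le_iff₀ hR]; linarith [(abs_le.mp (h i)).1]
  refine ⟨A, ?_, ?_⟩
  · refine Metric.isCompact_of_isClosed_isBounded (X_closed _ _ _) ?_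
    rw [isBounded_iff_forall_norm_le]
    refine ⟨∑ i : Fin (Module.finrank ℝ E), R, fun x hx => ?_⟩
    rw [key] at hx
    rw [← b.sum_repr x]
    refine (norm_sum_le _ _).trans (Finset.sum_le_sum fun i _ => ?_)
    rw [norm_smul, b.repr_apply_apply]
    simpa using hx i
  · intro x hx
    rw [key]
    intro i
    refine (abs_real_inner_le_norm _ _).trans ?_
    simpa using hx

theorem reduceP {q : Set E → ℝ} (hq : Cut q) (hE : 0 < Module.finrank ℝ E)
    (h : ∀ (a : E →L[ℝ] ℝ) (C : List (E →L[ℝ] ℝ)), a ≠ 0 → IsCompact (X [a] [] C) →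
      q (X [a] [] C) = 0) (P : Set E) (hP : IsPoly P) : q P = 0 := by
  have h0 := reduceN hq (fun A C => reduceA hq hE h A.length A C rfl)
  obtain ⟨hc, L, rfl⟩ := hP
  obtain ⟨R, hR⟩ := hc.isBounded.exists_norm_le
  obtain ⟨A₀, hA₀, hA₀'⟩ := exists_box (E := E) (max R 1) (by positivity)
  have key : ∀ L : List ((E →L[ℝ] ℝ) × ℝ), ∃ A N C : List (E →L[ℝ] ℝ),
      {x : E | ∀ p ∈ L, p.1 x ≤ p.2} = X A N C := by
    intro L
    induction L with
    | nil => exact ⟨[], [], [], by simp [X]⟩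
    | cons p L ih =>
      obtain ⟨A, N, C, hL⟩ := ih
      have hcons : {x : E | ∀ p' ∈ p :: L, p'.1 x ≤ p'.2} = {x | p.1 x ≤ p.2} ∩ X A N C := by
        rw [← hL]; ext x; simp
      rw [hcons]
      rcases lt_trichotomy p.2 0 with hp | hp | hp
      · refine ⟨A, (p.2⁻¹ • p.1) :: N, C, ?_⟩
        ext x
        simp only [X, List.mem_cons, forall_eq_or_imp, mem_inter_iff, mem_ofPred_eq,
          _root_.smul_apply, smul_eq_mul]
        have : p.1 x ≤ p.2 ↔ 1 ≤ p.2⁻¹ * p.1 x := by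
          rw [inv_mul_eq_div, le_div_iff_of_neg hp, one_mul]
        tauto
      · refine ⟨A, N, (-p.1) :: C, ?_⟩
        ext x
        simp only [X, List.mem_cons, forall_eq_or_imp, mem_inter_iff, mem_ofPred_eq,
          _root_.neg_apply, hp, Left.nonneg_neg_iff]
        tauto
      · refine ⟨(p.2⁻¹ • p.1) :: A, N, C, ?_⟩
        ext x
        simp only [X, List.mem_cons, forall_eq_or_imp, mem_inter_iff, mem_ofPred_eq,
          _root_.smul_apply, smul_eq_mul]
        have : p.1 x ≤ p.2 ↔ p.2⁻¹ * p.1 x ≤ 1 := by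
          rw [inv_mul_le_iff₀ hp, mul_one]
        tauto
  obtain ⟨A, N, C, hL⟩ := key L
  rw [hL] at hR ⊢
  have : X A N C = X (A₀ ++ A) N C := by
    ext x
    constructor
    · intro hx
      refine ⟨fun a ha => ?_, hx.2⟩
      rcases List.mem_append.mp ha with ha | ha
      · exact (hA₀' x ((hR x hx).trans (le_max_left _ _))).1 a ha
      · exact hx.1 a ha
    · intro hx
      exact ⟨fun a ha => hx.1 a (by simp [ha]), hx.2⟩
  rw [this]
  refine h0 _ _ _ (hA₀.of_isClosed_subset (X_closed _ _ _) ?_)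
  intro x hx
  exact ⟨fun a ha => hx.1 a (by simp [ha]), by simp, by simp⟩

end Basics
end Hadwiger

set_option linter.unusedSectionVars false

namespace Hadwiger

open scoped Pointwise RealInnerProductSpace Topology

section Gen
variable {E : Type} [NormedAddCommGroup E] [InnerProductSpace ℝ E] [FiniteDimensional ℝ E]

/-- Orthogonal families of nonzero vectors. -/
def OrthFam {d : ℕ} (w : Fin d → E) : Prop := (∀ i, w i ≠ 0) ∧ ∀ i j, i ≠ j → ⟪w i, w j⟫ = 0

/-- The orthoscheme given by an orthogonal family. -/
def Sx {d : ℕ} (w : Fin d → E) : Set E :=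
  {x | Antitone (fun j => ⟪w j, x⟫) ∧ ∀ j, 0 ≤ ⟪w j, x⟫ ∧ ⟪w j, x⟫ ≤ 1}

theorem OrthFam.eq_zero {d : ℕ} {w : Fin d → E} (hw : OrthFam w) (hd : Module.finrank ℝ E = d)
    {x : E} (hx : ∀ j, ⟪w j, x⟫ = 0) : x = 0 := by
  have li : LinearIndependent ℝ w :=
    linearIndependent_of_ne_zero_of_inner_eq_zero hw.1 (fun i j hij => hw.2 i j hij)
  have hs : Submodule.span ℝ (range w) = ⊤ := li.span_eq_top_of_card_eq_finrank' (by simp [hd])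
  have : x ∈ (Submodule.span ℝ (range w))ᗮ := by
    rw [Submodule.mem_orthogonal]
    intro u hu
    induction hu using Submodule.span_induction with
    | mem y hy => obtain ⟨j, rfl⟩ := hy; exact hx j
    | zero => simp
    | add y z _ _ hy hz => rw [inner_add_left, hy, hz, add_zero]
    | smul c y _ hy => rw [inner_smul_left, hy, mul_zero]
  rw [hs, Submodule.top_orthogonal_eq_bot] at this
  simpa using this

/-- Cone with apex `0` over a set in the hyperplane `⟪w, x⟫ = 1`. -/
def coneOver (w : E) (F : Set (Submodule.span ℝ {w})ᗮ) : Set E :=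
  {x | x = 0 ∨ ∃ t : ℝ, ∃ u ∈ F, 0 ≤ t ∧ t ≤ 1 ∧ x = t • ((‖w‖ ^ 2)⁻¹ • w + (u : E))}

theorem inner_w {w : E} (hw : w ≠ 0) (t : ℝ) (u : (Submodule.span ℝ {w})ᗮ) :
    ⟪w, t • ((‖w‖ ^ 2)⁻¹ • w + (u : E))⟫ = t := by
  have h1 : ⟪w, (u : E)⟫ = 0 := Submodule.mem_orthogonal_singleton_iff_inner_right.mp u.2
  rw [inner_smul_right, inner_add_right, inner_smul_right, h1, real_inner_self_eq_norm_sq, add_zero,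
    inv_mul_cancel₀ (by positivity), mul_one]

theorem cone_isCompact (w : E) {F : Set (Submodule.span ℝ {w})ᗮ} (hF : IsCompact F) :
    IsCompact (coneOver w F) := by
  have : coneOver w F = insert 0 ((fun p : ℝ × (Submodule.span ℝ {w})ᗮ =>
      p.1 • ((‖w‖ ^ 2)⁻¹ • w + (p.2 : E))) '' (Icc 0 1 ×ˢ F)) := by
    ext x
    simp only [coneOver, mem_ofPred_eq, mem_insert_iff, mem_image, mem_prod, mem_Icc, Prod.exists]
    constructor
    · rintro (h | ⟨t, u, hu, h0, h1, rfl⟩)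
      · exact Or.inl h
      · exact Or.inr ⟨t, u, ⟨⟨h0, h1⟩, hu⟩, rfl⟩
    · rintro (h | ⟨t, u, ⟨⟨h0, h1⟩, hu⟩, rfl⟩)
      · exact Or.inl h
      · exact Or.inr ⟨t, u, hu, h0, h1, rfl⟩
  rw [this]
  refine IsCompact.insert (IsCompact.image (isCompact_Icc.prod hF) ?_) _
  fun_prop

theorem cone_convex (w : E) {F : Set (Submodule.span ℝ {w})ᗮ} (hF : Convex ℝ F) :
    Convex ℝ (coneOver w F) := by
  rcases F.eq_empty_or_nonempty with rfl | ⟨u₀, hu₀⟩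
  · have : coneOver w ∅ = {0} := by ext x; simp [coneOver]
    rw [this]; exact convex_singleton 0
  have hG : Convex ℝ ((fun u : (Submodule.span ℝ {w})ᗮ => (‖w‖ ^ 2)⁻¹ • w + (u : E)) '' F) := by
    have := (hF.linear_image (Submodule.subtype _)).translate ((‖w‖ ^ 2)⁻¹ • w)
    rw [← image_comp] at this
    exact this
  have : coneOver w F = convexJoin ℝ {0}
      ((fun u : (Submodule.span ℝ {w})ᗮ => (‖w‖ ^ 2)⁻¹ • w + (u : E)) '' F) := by
    ext x
    simp only [coneOver, mem_ofPred_eq, convexJoin_singleton_left, mem_iUnion, segment_eq_image,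
      mem_image, mem_Icc, smul_zero, zero_add, exists_prop]
    constructor
    · rintro (rfl | ⟨t, u, hu, h0, h1, rfl⟩)
      · exact ⟨_, ⟨u₀, hu₀, rfl⟩, 0, ⟨le_rfl, zero_le_one⟩, by simp⟩
      · exact ⟨_, ⟨u, hu, rfl⟩, t, ⟨h0, h1⟩, rfl⟩
    · rintro ⟨_, ⟨u, hu, rfl⟩, t, ⟨h0, h1⟩, rfl⟩
      exact Or.inr ⟨t, u, hu, h0, h1, rfl⟩
  rw [this]
  exact (convex_singleton 0).convexJoin hG

theorem cone_proj {w : E} (t : ℝ) (u : (Submodule.span ℝ {w})ᗮ) :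
    (Submodule.span ℝ {w})ᗮ.orthogonalProjectionOnto (t • ((‖w‖ ^ 2)⁻¹ • w + (u : E))) = t • u := by
  rw [map_smul, map_add, map_smul,
    Submodule.orthogonalProjectionOnto_orthogonalComplement_singleton_eq_zero, smul_zero, zero_add,
    Submodule.orthogonalProjectionOnto_mem_subspace_eq_self]

theorem cone_cut {q : Set E → ℝ} (hq : Cut q) {w : E} (hw : w ≠ 0) :
    Cut (fun F : Set (Submodule.span ℝ {w})ᗮ => q (coneOver w F)) := by
  have hE : 0 < Module.finrank ℝ E := Module.finrank_pos_iff.mpr ⟨w, 0, hw⟩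
  constructor
  · have : coneOver w ∅ = {0} := by ext x; simp [coneOver]
    simp only [this]
    exact hq.singleton hE 0
  · intro F hF hc l c hl
    let P := (Submodule.span ℝ {w})ᗮ.orthogonalProjectionOnto
    let m : E →L[ℝ] ℝ := l.comp P - c • innerSL ℝ w
    have hm : ∀ (t : ℝ) (u : (Submodule.span ℝ {w})ᗮ),
        m (t • ((‖w‖ ^ 2)⁻¹ • w + (u : E))) = t * (l u - c) := by
      intro t u
      change l ((Submodule.span ℝ {w})ᗮ.orthogonalProjectionOnto _) - c * ⟪w, _⟫ = _
      rw [cone_proj, inner_w hw, map_smul, smul_eq_mul]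
      ring
    have hm0 : m ≠ 0 := by
      intro h0
      apply hl
      ext u
      have := hm 1 u
      have h2 := hm 1 0
      rw [h0] at this h2
      simp at this h2
      simp; linarith
    have := hq.cut _ (cone_isCompact w hF) (cone_convex w hc) m 0 hm0
    rw [this]
    congr 2
    · ext x
      constructor
      · rintro ⟨hx, hx'⟩
        rcases hx with rfl | ⟨t, u, hu, h0, h1, rfl⟩
        · exact Or.inl rfl
        · rcases h0.eq_or_lt with rfl | h0'
          · left; simp
          · right
            refine ⟨t, u, ⟨hu, ?_⟩, h0, h1, rfl⟩
            rw [mem_ofPred_eq, hm] at hx'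
            have := nonpos_of_mul_nonpos_right hx' h0'
            rw [mem_ofPred_eq]; linarith
      · rintro (rfl | ⟨t, u, ⟨hu, hu'⟩, h0, h1, rfl⟩)
        · exact ⟨Or.inl rfl, by simp⟩
        · refine ⟨Or.inr ⟨t, u, hu, h0, h1, rfl⟩, ?_⟩
          rw [mem_ofPred_eq, hm]
          rw [mem_ofPred_eq] at hu'
          exact mul_nonpos_of_nonneg_of_nonpos h0 (by linarith)
    · ext x
      constructor
      · rintro ⟨hx, hx'⟩
        rcases hx with rfl | ⟨t, u, hu, h0, h1, rfl⟩
        · exact Or.inl rfl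
        · rcases h0.eq_or_lt with rfl | h0'
          · left; simp
          · right
            refine ⟨t, u, ⟨hu, ?_⟩, h0, h1, rfl⟩
            rw [mem_ofPred_eq, hm] at hx'
            have := nonneg_of_mul_nonneg_right hx' h0'
            rw [mem_ofPred_eq]; linarith
      · rintro (rfl | ⟨t, u, ⟨hu, hu'⟩, h0, h1, rfl⟩)
        · exact ⟨Or.inl rfl, by simp⟩
        · refine ⟨Or.inr ⟨t, u, hu, h0, h1, rfl⟩, ?_⟩
          rw [mem_ofPred_eq, hm]
          rw [mem_ofPred_eq] at hu'
          exact mul_nonneg h0 (by linarith)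

theorem decomp {w : E} (hw : w ≠ 0) {x : E} (hx : ⟪w, x⟫ ≠ 0) :
    x = ⟪w, x⟫ • ((‖w‖ ^ 2)⁻¹ • w +
      ((⟪w, x⟫⁻¹ • (Submodule.span ℝ {w})ᗮ.orthogonalProjectionOnto x :
        (Submodule.span ℝ {w})ᗮ) : E)) := by
  have h1 : (((Submodule.span ℝ {w})ᗮ.orthogonalProjectionOnto x : (Submodule.span ℝ {w})ᗮ) : E)
      = x - (Submodule.span ℝ {w}).starProjection x := by
    rw [Submodule.orthogonalProjectionOnto_orthogonal]
  rw [Submodule.coe_smul, h1, smul_add, smul_smul, smul_smul, mul_inv_cancel₀ hx, one_smul,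
    Submodule.starProjection_singleton]
  simp only [RCLike.ofReal_real_eq_id, id_eq]
  rw [div_eq_mul_inv]
  abel

theorem orthFam_cons {d : ℕ} {w : E} (hw : w ≠ 0) {w' : Fin d → (Submodule.span ℝ {w})ᗮ}
    (h : OrthFam w') : OrthFam (Fin.cons w (fun j => (w' j : E)) : Fin (d + 1) → E) := by
  have h1 : ∀ j, ⟪w, (w' j : E)⟫ = 0 := fun j =>
    Submodule.mem_orthogonal_singleton_iff_inner_right.mp (w' j).2
  constructor
  · intro i
    refine Fin.cases ?_ (fun j => ?_) i
    · simpa using hw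
    · simpa using h.1 j
  · intro i j
    refine Fin.cases ?_ (fun i => ?_) i <;> refine Fin.cases ?_ (fun j => ?_) j
    · simp
    · intro _; simpa using h1 j
    · intro _; rw [real_inner_comm]; simpa using h1 i
    · intro hij
      have := h.2 i j (fun h => hij (by rw [h]))
      simpa using this

theorem cone_Sx {d : ℕ} (hd : Module.finrank ℝ E = d + 1) {w : E} (hw : w ≠ 0)
    {w' : Fin d → (Submodule.span ℝ {w})ᗮ} (h : OrthFam w') :
    coneOver w (Sx w') = Sx (Fin.cons w (fun j => (w' j : E)) : Fin (d + 1) → E) := by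
  have h1 : ∀ j, ⟪(w' j : E), w⟫ = 0 := fun j =>
    Submodule.mem_orthogonal_singleton_iff_inner_left.mp (w' j).2
  have hin : ∀ j (t : ℝ) (u : (Submodule.span ℝ {w})ᗮ),
      ⟪(w' j : E), t • ((‖w‖ ^ 2)⁻¹ • w + (u : E))⟫ = t * ⟪w' j, u⟫ := by
    intro j t u
    rw [inner_smul_right, inner_add_right, inner_smul_right, h1, mul_zero, zero_add]
    rfl
  ext x
  constructor
  · rintro (rfl | ⟨t, u, hu, h0, ht, rfl⟩)
    · exact ⟨fun i j _ => by simp, fun j => by simp⟩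
    · constructor
      · intro i j
        refine Fin.cases ?_ (fun i => ?_) i <;> refine Fin.cases ?_ (fun j => ?_) j
        · simp
        · intro _
          simp only [Fin.cons_succ, Fin.cons_zero, hin, inner_w hw]
          exact mul_le_of_le_one_right h0 (hu.2 j).2
        · intro hle; exact absurd hle (by simp)
        · intro hle
          simp only [Fin.cons_succ, hin]
          exact mul_le_mul_of_nonneg_left (hu.1 (Fin.succ_le_succ_iff.mp hle)) h0
      · intro j
        refine Fin.cases ?_ (fun j => ?_) j
        · simp only [Fin.cons_zero, inner_w hw]; exact ⟨h0, ht⟩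
        · simp only [Fin.cons_succ, hin]
          exact ⟨mul_nonneg h0 (hu.2 j).1, mul_le_one₀ ht (hu.2 j).1 (hu.2 j).2⟩
  · rintro ⟨ha, hb⟩
    have hb0 := hb 0
    simp only [Fin.cons_zero] at hb0
    have hbj : ∀ j, 0 ≤ ⟪(w' j : E), x⟫ ∧ ⟪(w' j : E), x⟫ ≤ ⟪w, x⟫ := by
      intro j
      have e1 := (hb j.succ).1
      have e2 := ha (Fin.zero_le j.succ)
      simp only [Fin.cons_succ, Fin.cons_zero] at e1 e2
      exact ⟨e1, e2⟩
    by_cases ht : ⟪w, x⟫ = 0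
    · left
      refine (orthFam_cons hw h).eq_zero hd fun j => ?_
      refine Fin.cases ?_ (fun j => ?_) j
      · simpa using ht
      · simp only [Fin.cons_succ]
        have := hbj j
        linarith
    · right
      have hpos : 0 < ⟪w, x⟫ := lt_of_le_of_ne hb0.1 (Ne.symm ht)
      have hin' : ∀ j, ⟪w' j, ⟪w, x⟫⁻¹ • (Submodule.span ℝ {w})ᗮ.orthogonalProjectionOnto x⟫ =
          ⟪w, x⟫⁻¹ * ⟪(w' j : E), x⟫ := by
        intro j
        rw [inner_smul_right, Submodule.inner_orthogonalProjectionOnto_eq_of_mem_left]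
      refine ⟨⟪w, x⟫, _, ?_, hb0.1, hb0.2, decomp hw ht⟩
      constructor
      · intro i j hij
        simp only [hin']
        have := ha (Fin.succ_le_succ_iff.mpr hij)
        simp only [Fin.cons_succ] at this
        exact mul_le_mul_of_nonneg_left this (by positivity)
      · intro j
        rw [hin']
        have := hbj j
        exact ⟨mul_nonneg (by positivity) this.1, by rw [inv_mul_le_iff₀ hpos]; linarith⟩

theorem cone_X {w : E} (hw : w ≠ 0) (C : List (E →L[ℝ] ℝ))
    (hX : IsCompact (X [innerSL ℝ w] [] C)) :
    ∃ F : Set (Submodule.span ℝ {w})ᗮ, IsPoly F ∧ X [innerSL ℝ w] [] C = coneOver w F := by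
  let v : E := (‖w‖ ^ 2)⁻¹ • w
  let L : List (((Submodule.span ℝ {w})ᗮ →L[ℝ] ℝ) × ℝ) :=
    C.map fun e => (-(e.comp (Submodule.subtypeL _)), e v)
  have hL : ∀ u : (Submodule.span ℝ {w})ᗮ, (∀ p ∈ L, p.1 u ≤ p.2) ↔ ∀ e ∈ C, 0 ≤ e (v + u) := by
    intro u
    simp only [L, List.mem_map, forall_exists_index, and_imp, forall_apply_eq_imp_iff₂,
      _root_.neg_apply, ContinuousLinearMap.comp_apply, Submodule.subtypeL_apply, map_add]
    refine forall₂_congr fun e _ => ?_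
    constructor <;> intro h <;> linarith
  refine ⟨{x | ∀ p ∈ L, p.1 x ≤ p.2}, ⟨?_, L, rfl⟩, ?_⟩
  · have : {x | ∀ p ∈ L, p.1 x ≤ p.2} = (fun u : (Submodule.span ℝ {w})ᗮ => v + (u : E)) ⁻¹'
        X [innerSL ℝ w] [] C := by
      ext u
      simp only [mem_ofPred_eq, hL, mem_preimage, X, List.mem_cons, List.not_mem_nil, or_false,
        forall_eq, false_imp_iff, implies_true, true_and, innerSL_apply_apply]
      have : ⟪w, v + (u : E)⟫ = 1 := by
        have := inner_w hw 1 u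
        rwa [one_smul] at this
      rw [this]
      simp
    rw [this]
    refine Topology.IsClosedEmbedding.isCompact_preimage ?_ hX
    exact (Homeomorph.addLeft v).isClosedEmbedding.comp
      (Submodule.closed_of_finiteDimensional _).isClosedEmbedding_subtypeVal
  · ext x
    constructor
    · intro hx
      have hx' := hx
      simp only [X, List.mem_cons, List.not_mem_nil, or_false,
        forall_eq, false_imp_iff, implies_true, true_and, innerSL_apply_apply, mem_ofPred_eq] at hx
      rcases le_or_gt ⟪w, x⟫ 0 with h0 | h0
      · left
        obtain ⟨R, hR⟩ := hX.isBounded.exists_norm_le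
        by_contra hne
        have hn : 0 < ‖x‖ := norm_pos_iff.mpr hne
        have hR0 : 0 ≤ R := (norm_nonneg x).trans (hR x hx')
        have := hR (((R + 1) / ‖x‖) • x) (by
          simp only [X, List.mem_cons, List.not_mem_nil, or_false,
            forall_eq, false_imp_iff, implies_true, true_and, innerSL_apply_apply, mem_ofPred_eq,
            inner_smul_right, map_smul, smul_eq_mul]
          have hpos : 0 ≤ (R + 1) / ‖x‖ := by positivity
          refine ⟨?_, fun e he => mul_nonneg hpos (hx.2 e he)⟩
          have := mul_nonpos_of_nonneg_of_nonpos hpos h0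
          linarith)
        rw [norm_smul, Real.norm_eq_abs, abs_of_nonneg (by positivity),
          div_mul_cancel₀ _ hn.ne'] at this
        linarith
      · right
        refine ⟨⟪w, x⟫, _, ?_, h0.le, hx.1, decomp hw h0.ne'⟩
        rw [mem_ofPred_eq, hL]
        intro e he
        have h3 := hx.2 e he
        rw [decomp hw h0.ne', map_smul, smul_eq_mul] at h3
        exact nonneg_of_mul_nonneg_right h3 h0
    · rintro (rfl | ⟨t, u, hu, h0, h1, rfl⟩)
      · simp [X]
      · simp only [X, List.mem_cons, List.not_mem_nil, or_false,
            forall_eq, false_imp_iff, implies_true, true_and, innerSL_apply_apply, mem_ofPred_eq,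
            inner_w hw]
        refine ⟨h1, fun e he => ?_⟩
        rw [mem_ofPred_eq, hL] at hu
        rw [map_smul, smul_eq_mul]
        exact mul_nonneg h0 (hu e he)

end Gen

theorem gen : ∀ (d : ℕ) (E : Type) [NormedAddCommGroup E] [InnerProductSpace ℝ E]
    [FiniteDimensional ℝ E] (_ : Module.finrank ℝ E = d) (q : Set E → ℝ) (_ : Cut q)
    (_ : ∀ w : Fin d → E, OrthFam w → q (Sx w) = 0) (P : Set E) (_ : IsPoly P), q P = 0 := by
  intro d
  induction d with
  | zero =>
    intro E _ _ _ hE q hq h P hP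
    have hsub : Subsingleton E := Module.finrank_zero_iff.mp hE
    have h1 := h Fin.elim0 ⟨fun i => i.elim0, fun i => i.elim0⟩
    have h2 : Sx (Fin.elim0 : Fin 0 → E) = univ := by
      ext x
      simp only [Sx, mem_ofPred_eq, mem_univ, iff_true]
      exact ⟨fun i => i.elim0, fun i => i.elim0⟩
    rw [h2] at h1
    rcases P.eq_empty_or_nonempty with rfl | hne
    · exact hq.empty
    · rw [Subsingleton.eq_univ_of_nonempty hne, h1]
  | succ d ih =>
    intro E _ _ _ hE q hq h P hP
    refine reduceP hq (by omega) ?_ P hP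
    intro a C ha hX
    obtain ⟨w, rfl⟩ : ∃ w, innerSL ℝ w = a :=
      ⟨(InnerProductSpace.toDual ℝ E).symm a, by ext x; simp⟩
    have hw : w ≠ 0 := by rintro rfl; simp at ha
    obtain ⟨F, hF, hXF⟩ := cone_X hw C hX
    rw [hXF]
    have hfr : Module.finrank ℝ (Submodule.span ℝ {w})ᗮ = d := by
      have : Fact (Module.finrank ℝ E = d + 1) := ⟨hE⟩
      exact Submodule.finrank_orthogonal_span_singleton hw
    refine ih _ hfr _ (cone_cut hq hw) ?_ F hF
    intro w' hw'
    rw [cone_Sx hE hw hw']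
    exact h _ (orthFam_cons hw hw')

end Hadwiger

set_option linter.unusedSectionVars false

namespace Hadwiger

open scoped Pointwise RealInnerProductSpace Topology

section Approx
variable {E : Type} [NormedAddCommGroup E] [InnerProductSpace ℝ E] [FiniteDimensional ℝ E]
variable {F : Type} [NormedAddCommGroup F] [InnerProductSpace ℝ F] [FiniteDimensional ℝ F]

/-- Hausdorff convergence, elementary form. -/
def CLim (K : ℕ → Set E) (L : Set E) : Prop := ∀ ε > 0, ∀ᶠ m in atTop, Close ε (K m) L

/-- Sequential continuity on bodies. -/
def SCont (q : Set E → ℝ) : Prop := ∀ (K : ℕ → Set E) (L : Set E), (∀ m, Body (K m)) → Body L →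
    CLim K L → Tendsto (fun m => q (K m)) atTop (𝓝 (q L))

theorem Nice.scont {f : Set E → ℝ} (hf : Nice f) : SCont f := hf.cont

theorem Body.add {K L : Set E} (hK : Body K) (hL : Body L) : Body (K + L) :=
  ⟨hK.1.add hL.1, hK.2.1.add hL.2.1, hK.2.2.add hL.2.2⟩

theorem Body.lin {K : Set E} (hK : Body K) (l : E →L[ℝ] F) : Body (l '' K) :=
  ⟨hK.1.image l, hK.2.1.image l.continuous, hK.2.2.linear_image l.toLinearMap⟩

theorem Body.iso {K : Set E} (hK : Body K) (g : E ≃ₗᵢ[ℝ] E) : Body (g '' K) :=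
  hK.lin (g.toContinuousLinearEquiv : E →L[ℝ] E)

theorem Body.coe {W : Submodule ℝ E} {K : Set W} (hK : Body K) : Body ((↑) '' K : Set E) :=
  hK.lin W.subtypeL

theorem Body.smul {K : Set E} (hK : Body K) (c : ℝ) : Body (c • K) :=
  ⟨hK.1.smul_set, hK.2.1.smul c, hK.2.2.smul c⟩

theorem Body.single (x : E) : Body ({x} : Set E) :=
  ⟨singleton_nonempty x, isCompact_singleton, convex_singleton x⟩

theorem Body.translate {K : Set E} (hK : Body K) (v : E) : Body ((fun x => v + x) '' K) :=
  ⟨hK.1.image _, hK.2.1.image (by fun_prop), hK.2.2.translate v⟩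

theorem trans_eq (K : Set E) (v : E) : (fun x => v + x) '' K = {v} + K := by
  simp

theorem Close.mono {ε δ : ℝ} {A B : Set E} (h : Close ε A B) (hle : ε ≤ δ) : Close δ A B :=
  ⟨fun x hx => let ⟨y, hy, h'⟩ := h.1 x hx; ⟨y, hy, h'.trans hle⟩,
   fun x hx => let ⟨y, hy, h'⟩ := h.2 x hx; ⟨y, hy, h'.trans hle⟩⟩

theorem Close.add {ε δ : ℝ} {A B A' B' : Set E} (h : Close ε A B) (h' : Close δ A' B') :
    Close (ε + δ) (A + A') (B + B') := by
  constructor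
  · rintro _ ⟨x, hx, y, hy, rfl⟩
    obtain ⟨x', hx', hd⟩ := h.1 x hx
    obtain ⟨y', hy', hd'⟩ := h'.1 y hy
    exact ⟨_, add_mem_add hx' hy', (dist_add_add_le _ _ _ _).trans (add_le_add hd hd')⟩
  · rintro _ ⟨x, hx, y, hy, rfl⟩
    obtain ⟨x', hx', hd⟩ := h.2 x hx
    obtain ⟨y', hy', hd'⟩ := h'.2 y hy
    exact ⟨_, add_mem_add hx' hy', (dist_add_add_le _ _ _ _).trans (add_le_add hd hd')⟩

theorem Close.lin {ε : ℝ} {A B : Set E} (h : Close ε A B) (l : E →L[ℝ] F) :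
    Close (‖l‖ * ε) (l '' A) (l '' B) := by
  constructor
  · rintro _ ⟨x, hx, rfl⟩
    obtain ⟨x', hx', hd⟩ := h.1 x hx
    refine ⟨_, mem_image_of_mem _ hx', (l.lipschitz.dist_le_mul _ _).trans ?_⟩
    exact mul_le_mul_of_nonneg_left hd (norm_nonneg _)
  · rintro _ ⟨x, hx, rfl⟩
    obtain ⟨x', hx', hd⟩ := h.2 x hx
    refine ⟨_, mem_image_of_mem _ hx', (l.lipschitz.dist_le_mul _ _).trans ?_⟩
    exact mul_le_mul_of_nonneg_left hd (norm_nonneg _)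

theorem Close.refl {A : Set E} {ε : ℝ} (hε : 0 ≤ ε) : Close ε A A :=
  ⟨fun x hx => ⟨x, hx, by simpa⟩, fun x hx => ⟨x, hx, by simpa⟩⟩

theorem CLim.const (A : Set E) : CLim (fun _ => A) A :=
  fun _ hε => Eventually.of_forall fun _ => Close.refl hε.le

theorem CLim.add {A B : ℕ → Set E} {A' B' : Set E} (h : CLim A A') (h' : CLim B B') :
    CLim (fun m => A m + B m) (A' + B') := by
  intro ε hε
  filter_upwards [h (ε / 2) (by linarith), h' (ε / 2) (by linarith)] with m h1 h2
  exact (h1.add h2).mono (by linarith)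

theorem CLim.lin {A : ℕ → Set E} {A' : Set E} (h : CLim A A') (l : E →L[ℝ] F) :
    CLim (fun m => l '' A m) (l '' A') := by
  intro ε hε
  have hp : 0 < ‖l‖ + 1 := by positivity
  filter_upwards [h (ε / (‖l‖ + 1)) (by positivity)] with m h1
  refine (h1.lin l).mono ?_
  rw [mul_div_assoc', div_le_iff₀ hp]
  nlinarith [norm_nonneg l]

theorem CLim.coe {W : Submodule ℝ E} {A : ℕ → Set W} {A' : Set W} (h : CLim A A') :
    CLim (fun m => ((↑) '' A m : Set E)) ((↑) '' A') := h.lin W.subtypeL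

theorem CLim.smul {A : ℕ → Set E} {A' : Set E} (h : CLim A A') (c : ℝ) :
    CLim (fun m => c • A m) (c • A') := h.lin (c • ContinuousLinearMap.id ℝ E)

/-- Rescaling: if `c m → c` then `c m • K → c • K`. -/
theorem CLim.scale {K : Set E} (hK : IsCompact K) {c : ℕ → ℝ} {c₀ : ℝ} (h : Tendsto c atTop (𝓝 c₀)) :
    CLim (fun m => c m • K) (c₀ • K) := by
  intro ε hε
  obtain ⟨R, hR⟩ := hK.isBounded.exists_norm_le
  have hp : 0 < |R| + 1 := by positivity
  have := Metric.tendsto_nhds.mp h (ε / (|R| + 1)) (by positivity)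
  filter_upwards [this] with m hm
  have key : ∀ x ∈ K, dist (c m • x) (c₀ • x) ≤ ε := by
    intro x hx
    rw [dist_eq_norm, ← sub_smul, norm_smul]
    have h1 : ‖x‖ ≤ |R| + 1 := (hR x hx).trans ((le_abs_self R).trans (by linarith))
    have h2 : ‖c m - c₀‖ ≤ ε / (|R| + 1) := by rw [← dist_eq_norm]; exact hm.le
    calc _ ≤ ε / (|R| + 1) * (|R| + 1) := by gcongr
      _ = ε := by field_simp
  constructor
  · rintro _ ⟨x, hx, rfl⟩
    exact ⟨_, smul_mem_smul_set hx, key x hx⟩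
  · rintro _ ⟨x, hx, rfl⟩
    exact ⟨_, smul_mem_smul_set hx, key x hx⟩

theorem Cut.mk' {q : Set E → ℝ} (h0 : q ∅ = 0)
    (h : ∀ K, Body K → ∀ (l : E →L[ℝ] ℝ) (c : ℝ), l ≠ 0 →
      Body (K ∩ {x | l x ≤ c}) → Body (K ∩ {x | c ≤ l x}) →
      (K ∩ {x | l x ≤ c}) ∪ (K ∩ {x | c ≤ l x}) = K →
      Body (K ∩ {x | l x = c}) → (K ∩ {x | l x ≤ c}) ∩ (K ∩ {x | c ≤ l x}) = K ∩ {x | l x = c} →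
      q K = q (K ∩ {x | l x ≤ c}) + q (K ∩ {x | c ≤ l x})) : Cut q := by
  refine ⟨h0, fun K hK hc l c hl => ?_⟩
  have hun : (K ∩ {x | l x ≤ c}) ∪ (K ∩ {x | c ≤ l x}) = K := by
    ext x
    simp only [mem_union, mem_inter_iff, mem_ofPred_eq]
    have := le_total (l x) c
    tauto
  have hinter : (K ∩ {x | l x ≤ c}) ∩ (K ∩ {x | c ≤ l x}) = K ∩ {x | l x = c} := by
    ext x
    simp only [mem_inter_iff, mem_ofPred_eq]
    constructor
    · rintro ⟨⟨h1, h2⟩, _, h3⟩; exact ⟨h1, le_antisymm h2 h3⟩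
    · rintro ⟨h1, h2⟩; exact ⟨⟨h1, h2.le⟩, h1, h2.ge⟩
  rcases (K ∩ {x | l x ≤ c}).eq_empty_or_nonempty with he | hne
  · rw [he, empty_union] at hun
    rw [he, hun, h0, zero_add]
  rcases (K ∩ {x | c ≤ l x}).eq_empty_or_nonempty with he' | hne'
  · rw [he', union_empty] at hun
    rw [he', hun, h0, add_zero]
  have c1 : IsClosed {x : E | l x ≤ c} := isClosed_le l.continuous continuous_const
  have c2 : IsClosed {x : E | c ≤ l x} := isClosed_le continuous_const l.continuous
  have c3 : IsClosed {x : E | l x = c} := isClosed_eq l.continuous continuous_const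
  have v1 : Convex ℝ {x : E | l x ≤ c} := convex_halfSpace_le l.isLinear c
  have v2 : Convex ℝ {x : E | c ≤ l x} := convex_halfSpace_ge l.isLinear c
  have v3 : Convex ℝ {x : E | l x = c} := convex_hyperplane l.isLinear c
  refine h K ⟨hne.mono inter_subset_left, hK, hc⟩ l c hl ⟨hne, hK.inter_right c1, hc.inter v1⟩
    ⟨hne', hK.inter_right c2, hc.inter v2⟩ hun ⟨?_, hK.inter_right c3, hc.inter v3⟩ hinter
  obtain ⟨x, hx, hx'⟩ := hne
  obtain ⟨y, hy, hy'⟩ := hne'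
  have hseg := (hc.isPreconnected).intermediate_value hx hy l.continuous.continuousOn
  obtain ⟨z, hz, hz'⟩ := hseg ⟨hx', hy'⟩
  exact ⟨z, hz, hz'⟩

theorem Nice.cut {f : Set E → ℝ} (hf : Nice f) : Cut f := by
  refine Cut.mk' hf.empty ?_
  intro K hK l c hl h1 h2 hun h3 hinter
  have := hf.val _ _ h1 h2 (by rw [hun]; exact hK.2.2)
  rw [hun, hinter, hf.simple _ h3 l c hl (fun x hx => hx.2), sub_zero] at this
  exact this

theorem poly_approx {K : Set E} (hK : Body K) {ε : ℝ} (hε : 0 < ε) :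
    ∃ P, IsPoly P ∧ Body P ∧ K ⊆ P ∧ Close ε P K := by
  obtain ⟨R, hR⟩ := hK.2.1.isBounded.exists_norm_le
  obtain ⟨A, hA, hA'⟩ := exists_box (E := E) (max R 1) (by positivity)
  set B : Set E := X A [] [] with hB
  have hKB : K ⊆ B := fun x hx => hA' x ((hR x hx).trans (le_max_left _ _))
  have hC : IsCompact (B \ thickening ε K) := hA.diff isOpen_thickening
  have sep : ∀ y : E, ∃ p : (E →L[ℝ] ℝ) × ℝ, (∀ a ∈ K, p.1 a ≤ p.2) ∧ (y ∉ K → p.2 < p.1 y) := by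
    intro y
    by_cases hy : y ∈ K
    · exact ⟨(0, 0), by simp, fun h => absurd hy h⟩
    · obtain ⟨l, u, h1, h2⟩ := geometric_hahn_banach_closed_point hK.2.2 hK.2.1.isClosed hy
      exact ⟨(l, u), fun a ha => (h1 a ha).le, fun _ => h2⟩
  choose p hp1 hp2 using sep
  obtain ⟨t, ht2⟩ := hC.elim_nhds_subcover' (fun y _ => {x | (p y).2 < (p y).1 x}) (by
    intro y hy
    refine (isOpen_lt continuous_const (p y).1.continuous).mem_nhds (hp2 y ?_)
    exact fun h => hy.2 (self_subset_thickening hε K h))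
  let L : List ((E →L[ℝ] ℝ) × ℝ) := A.map (fun a => (a, 1)) ++ List.map (fun y : ↥(B \ thickening ε K) => p (y : E)) t.toList
  have hP : ({x | ∀ p ∈ L, p.1 x ≤ p.2} : Set E) = B ∩ {x | ∀ y ∈ t, (p y).1 x ≤ (p y).2} := by
    ext x
    simp only [L, hB, X, List.mem_append, List.mem_map, mem_ofPred_eq, mem_inter_iff,
      Finset.mem_toList]
    constructor
    · intro h
      refine ⟨⟨fun a ha => h (a, 1) (Or.inl ⟨a, ha, rfl⟩), by simp, by simp⟩, fun y hy => ?_⟩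
      exact h _ (Or.inr ⟨y, hy, rfl⟩)
    · rintro ⟨⟨h1, _, _⟩, h2⟩ q (⟨a, ha, rfl⟩ | ⟨y, hy, rfl⟩)
      · exact h1 a ha
      · exact h2 y hy
  have hcp : IsCompact ({x | ∀ p ∈ L, p.1 x ≤ p.2} : Set E) := by
    refine hA.of_isClosed_subset (closed_half L) ?_
    rw [hP]; exact inter_subset_left
  have hsub : K ⊆ {x | ∀ p ∈ L, p.1 x ≤ p.2} := by
    rw [hP]
    exact fun x hx => ⟨hKB hx, fun y _ => hp1 y x hx⟩
  refine ⟨_, ⟨hcp, L, rfl⟩, ⟨hK.1.mono hsub, hcp, convex_half L⟩, hsub, ?_, ?_⟩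
  · intro x hx
    rw [hP] at hx
    by_contra hcon
    push Not at hcon
    have : x ∈ B \ thickening ε K := by
      refine ⟨hx.1, fun h => ?_⟩
      obtain ⟨z, hz, hz'⟩ := mem_thickening_iff.mp h
      exact (hcon z hz).not_gt hz'
    obtain ⟨y, hy, hy'⟩ := mem_iUnion₂.mp (ht2 this)
    exact (hx.2 y hy).not_gt hy'
  · intro x hx
    exact ⟨x, hsub hx, by simpa using hε.le⟩

theorem poly_to_body {q : Set E → ℝ} (hq : SCont q) (h : ∀ P, IsPoly P → q P = 0) {K : Set E}
    (hK : Body K) : q K = 0 := by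
  have hpos : ∀ m : ℕ, (0 : ℝ) < 1 / (m + 1) := fun m => by positivity
  choose P hP1 hP2 hP3 hP4 using fun m => poly_approx hK (hpos m)
  have hl : CLim P K := by
    intro ε hε
    have := (tendsto_one_div_add_atTop_nhds_zero_nat (𝕜 := ℝ)).eventually (gt_mem_nhds hε)
    filter_upwards [this] with m hm
    exact (hP4 m).mono hm.le
  have := hq P K hP2 hK hl
  simp only [h _ (hP1 _)] at this
  exact tendsto_nhds_unique this tendsto_const_nhds

end Approx
end Hadwiger

set_option linter.unusedSectionVars false

namespace Hadwiger

open scoped Pointwise RealInnerProductSpace Topology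

section Dissect
variable {E : Type} [NormedAddCommGroup E] [InnerProductSpace ℝ E] [FiniteDimensional ℝ E]

/-- Auxiliary staircase sets. -/
def Tk {d : ℕ} (w : Fin d → E) (k : ℕ) : Set E :=
  {x | Antitone (fun j => ⟪w j, x⟫) ∧ (∀ j, 0 ≤ ⟪w j, x⟫ ∧ ⟪w j, x⟫ ≤ 2) ∧
    ∀ j : Fin d, j.1 < k → 1 ≤ ⟪w j, x⟫}

/-- Auxiliary pieces. -/
def Pk {d : ℕ} (w : Fin d → E) (k : ℕ) : Set E :=
  {x | x ∈ Tk w k ∧ ∀ j : Fin d, k ≤ j.1 → ⟪w j, x⟫ ≤ 1}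

variable {d : ℕ} {w : Fin d → E}

theorem coord_compact (hw : OrthFam w) (hd : Module.finrank ℝ E = d) {T : Set E} (hc : IsClosed T)
    (hb : ∀ x ∈ T, ∀ j, 0 ≤ ⟪w j, x⟫ ∧ ⟪w j, x⟫ ≤ 2) : IsCompact T := by
  let φ : E →ₗ[ℝ] (Fin d → ℝ) := LinearMap.pi fun j => (innerSL ℝ (w j)).toLinearMap
  have hφ : ∀ x j, φ x j = ⟪w j, x⟫ := fun x j => rfl
  have hinj : Function.Injective φ := by
    rw [← LinearMap.ker_eq_bot, LinearMap.ker_eq_bot']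
    intro x hx
    exact hw.eq_zero hd fun j => by rw [← hφ, hx]; rfl
  have hemb := LinearMap.isClosedEmbedding_of_injective (LinearMap.ker_eq_bot.mpr hinj)
  have := hemb.isCompact_preimage (isCompact_Icc (a := (0 : Fin d → ℝ)) (b := fun _ => 2))
  refine this.of_isClosed_subset hc ?_
  intro x hx
  exact ⟨fun j => (hb x hx j).1, fun j => (hb x hx j).2⟩

theorem closed_antitone (w : Fin d → E) : IsClosed {x : E | Antitone (fun j => ⟪w j, x⟫)} := by
  have : {x : E | Antitone (fun j => ⟪w j, x⟫)} =
      ⋂ i, ⋂ j, ⋂ (_ : i ≤ j), {x : E | ⟪w j, x⟫ ≤ ⟪w i, x⟫} := by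
    ext x; simp [Antitone]
  rw [this]
  refine isClosed_iInter fun i => isClosed_iInter fun j => isClosed_iInter fun _ => ?_
  exact isClosed_le (by fun_prop) (by fun_prop)

theorem convex_antitone (w : Fin d → E) : Convex ℝ {x : E | Antitone (fun j => ⟪w j, x⟫)} := by
  have : {x : E | Antitone (fun j => ⟪w j, x⟫)} =
      ⋂ i, ⋂ j, ⋂ (_ : i ≤ j), {x : E | innerSL ℝ (w j - w i) x ≤ 0} := by
    ext x; simp [Antitone, inner_sub_left]
  rw [this]
  refine convex_iInter fun i => convex_iInter fun j => convex_iInter fun _ => ?_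
  exact convex_halfSpace_le (innerSL ℝ (w j - w i)).isLinear 0

theorem Tk_eq (k : ℕ) : Tk w k = {x : E | Antitone (fun j => ⟪w j, x⟫)} ∩
    ⋂ j : Fin d, ({x | 0 ≤ innerSL ℝ (w j) x} ∩ {x | innerSL ℝ (w j) x ≤ 2} ∩
      {x | (if j.1 < k then (1 : ℝ) else 0) ≤ innerSL ℝ (w j) x}) := by
  ext x
  simp only [Tk, mem_ofPred_eq, mem_inter_iff, mem_iInter, innerSL_apply_apply]
  constructor
  · rintro ⟨h1, h2, h3⟩
    refine ⟨h1, fun j => ⟨⟨(h2 j).1, (h2 j).2⟩, ?_⟩⟩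
    split_ifs with h
    · exact h3 j h
    · exact (h2 j).1
  · rintro ⟨h1, h2⟩
    refine ⟨h1, fun j => ⟨(h2 j).1.1, (h2 j).1.2⟩, fun j hj => ?_⟩
    have := (h2 j).2
    rwa [if_pos hj] at this

theorem Tk_convex (k : ℕ) : Convex ℝ (Tk w k) := by
  rw [Tk_eq]
  refine (convex_antitone w).inter (convex_iInter fun j => ?_)
  exact ((convex_halfSpace_ge (innerSL ℝ (w j)).isLinear _).inter
    (convex_halfSpace_le (innerSL ℝ (w j)).isLinear _)).inter
    (convex_halfSpace_ge (innerSL ℝ (w j)).isLinear _)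

theorem Tk_compact (hw : OrthFam w) (hd : Module.finrank ℝ E = d) (k : ℕ) : IsCompact (Tk w k) := by
  refine coord_compact hw hd ?_ fun x hx => hx.2.1
  rw [Tk_eq]
  refine (closed_antitone w).inter (isClosed_iInter fun j => ?_)
  exact ((isClosed_le continuous_const (by fun_prop)).inter
    (isClosed_le (by fun_prop) continuous_const)).inter (isClosed_le continuous_const (by fun_prop))

theorem Pk_eq {k : ℕ} (hk : k < d) : Tk w k ∩ {x | innerSL ℝ (w ⟨k, hk⟩) x ≤ 1} = Pk w k := by
  ext x
  simp only [Pk, mem_inter_iff, mem_ofPred_eq, innerSL_apply_apply]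
  constructor
  · rintro ⟨h1, h2⟩
    refine ⟨h1, fun j hj => ?_⟩
    have hkj : (⟨k, hk⟩ : Fin d) ≤ j := hj
    exact (h1.1 hkj).trans h2
  · rintro ⟨h1, h2⟩
    exact ⟨h1, h2 ⟨k, hk⟩ le_rfl⟩

theorem Tk_succ {k : ℕ} (hk : k < d) :
    Tk w k ∩ {x | 1 ≤ innerSL ℝ (w ⟨k, hk⟩) x} = Tk w (k + 1) := by
  ext x
  simp only [Tk, mem_inter_iff, mem_ofPred_eq, innerSL_apply_apply]
  constructor
  · rintro ⟨⟨h1, h2, h3⟩, h4⟩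
    refine ⟨h1, h2, fun j hj => ?_⟩
    rcases Nat.lt_succ_iff_lt_or_eq.mp hj with h | h
    · exact h3 j h
    · have : j = ⟨k, hk⟩ := Fin.ext h
      rw [this]; exact h4
  · rintro ⟨h1, h2, h3⟩
    exact ⟨⟨h1, h2, fun j hj => h3 j (by omega)⟩, h3 ⟨k, hk⟩ (by simp)⟩

theorem Pk_compact (hw : OrthFam w) (hd : Module.finrank ℝ E = d) {k : ℕ} (hk : k < d) :
    IsCompact (Pk w k) := by
  rw [← Pk_eq hk]
  exact (Tk_compact hw hd k).inter_right (isClosed_le (by fun_prop) continuous_const)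

theorem Pk_convex {k : ℕ} (hk : k < d) : Convex ℝ (Pk w k) := by
  rw [← Pk_eq hk]
  exact (Tk_convex k).inter (convex_halfSpace_le (innerSL ℝ (w ⟨k, hk⟩)).isLinear _)

theorem Pk_zero : Pk w 0 = Sx w := by
  ext x
  simp only [Pk, Tk, Sx, mem_ofPred_eq]
  constructor
  · rintro ⟨⟨h1, h2, -⟩, h3⟩
    exact ⟨h1, fun j => ⟨(h2 j).1, h3 j (Nat.zero_le _)⟩⟩
  · rintro ⟨h1, h2⟩
    exact ⟨⟨h1, fun j => ⟨(h2 j).1, by linarith [(h2 j).2]⟩, by simp⟩, fun j _ => (h2 j).2⟩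

theorem Sx_body (hw : OrthFam w) (hd : Module.finrank ℝ E = d) (h1 : 0 < d) : Body (Sx w) := by
  rw [← Pk_zero]
  refine ⟨?_, Pk_compact hw hd h1, Pk_convex h1⟩
  rw [Pk_zero]
  refine ⟨0, ?_⟩
  simp [Sx, Antitone]

theorem Tk_zero : Tk w 0 = (2 : ℝ) • Sx w := by
  ext x
  rw [mem_smul_set_iff_inv_smul_mem₀ two_ne_zero]
  simp only [Tk, Sx, mem_ofPred_eq, inner_smul_right]
  constructor
  · rintro ⟨h1, h2, -⟩
    refine ⟨fun i j hij => ?_, fun j => ?_⟩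
    · have := h1 hij; simp only at this ⊢; linarith
    · have := h2 j; constructor <;> linarith
  · rintro ⟨h1, h2⟩
    refine ⟨fun i j hij => ?_, fun j => ?_, by simp⟩
    · have := h1 hij; simp only at this ⊢; linarith
    · have := h2 j; constructor <;> linarith

theorem Tk_last (hw : OrthFam w) :
    Tk w d = (fun x => (∑ j, (‖w j‖ ^ 2)⁻¹ • w j) + x) '' Sx w := by
  have hv : ∀ i, ⟪w i, ∑ j, (‖w j‖ ^ 2)⁻¹ • w j⟫ = 1 := by
    intro i
    rw [inner_sum, Finset.sum_eq_single i]
    · have := hw.1 i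
      rw [inner_smul_right, real_inner_self_eq_norm_sq, inv_mul_cancel₀ (by positivity)]
    · intro j _ hj
      rw [inner_smul_right, hw.2 i j hj.symm, mul_zero]
    · simp
  generalize (∑ j, (‖w j‖ ^ 2)⁻¹ • w j) = v at hv
  ext x
  rw [image_add_left, mem_preimage]
  simp only [Tk, Sx, mem_ofPred_eq, inner_add_right, inner_neg_right, hv]
  constructor
  · rintro ⟨h1, h2, h3⟩
    refine ⟨fun i j hij => ?_, fun j => ?_⟩
    · have := h1 hij; simp only at this ⊢; linarith
    · have := h2 j; have := h3 j j.2; constructor <;> linarith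
  · rintro ⟨h1, h2⟩
    refine ⟨fun i j hij => ?_, fun j => ?_, fun j _ => ?_⟩
    · have := h1 hij; simp only at this ⊢; linarith
    · have := h2 j; constructor <;> linarith
    · have := h2 j; linarith

theorem Pk_orth {q : Set E → ℝ} (hq : Cut q)
    (horth : ∀ U : Submodule ℝ E, U ≠ ⊥ → U ≠ ⊤ → ∀ (F : Set U) (G : Set Uᗮ), Body F → Body G →
      q (((↑) '' F : Set E) + ((↑) '' G : Set E)) = 0)
    (hw : OrthFam w) (hd : Module.finrank ℝ E = d) {k : ℕ} (hk0 : 0 < k) (hk : k < d) :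
    q (Pk w k) = 0 := by
  rcases (Pk w k).eq_empty_or_nonempty with he | hne
  · rw [he, hq.empty]
  have hB : Body (Pk w k) := ⟨hne, Pk_compact hw hd hk, Pk_convex hk⟩
  set U : Submodule ℝ E := Submodule.span ℝ (w '' {j | j.1 < k}) with hU
  have hin : ∀ j : Fin d, j.1 < k → w j ∈ U := fun j hj => Submodule.subset_span ⟨j, hj, rfl⟩
  have hout : ∀ j : Fin d, k ≤ j.1 → w j ∈ Uᗮ := by
    intro j hj
    rw [Submodule.mem_orthogonal]
    intro u hu
    induction hu using Submodule.span_induction with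
    | mem y hy =>
      obtain ⟨i, hi, rfl⟩ := hy
      refine hw.2 i j ?_
      rintro rfl
      have : i.1 < k := hi
      omega
    | zero => simp
    | add y z _ _ hy hz => rw [inner_add_left, hy, hz, add_zero]
    | smul c y _ hy => rw [inner_smul_left, hy, mul_zero]
  have hU0 : U ≠ ⊥ := by
    intro h
    have := hin ⟨0, by omega⟩ hk0
    rw [h, Submodule.mem_bot] at this
    exact hw.1 _ this
  have hU1 : U ≠ ⊤ := by
    intro h
    have := hout ⟨k, hk⟩ le_rfl
    rw [h, Submodule.top_orthogonal_eq_bot, Submodule.mem_bot] at this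
    exact hw.1 _ this
  have := horth U hU0 hU1 (U.orthogonalProjectionOnto '' Pk w k) (Uᗮ.orthogonalProjectionOnto '' Pk w k)
    (hB.lin _) (hB.lin _)
  convert this using 2
  have key : ∀ x : E, (U.orthogonalProjectionOnto x : E) + (Uᗮ.orthogonalProjectionOnto x : E) = x := by
    intro x
    rw [Submodule.orthogonalProjectionOnto_orthogonal]
    change U.starProjection x + (x - U.starProjection x) = x
    abel
  have c1 : ∀ j : Fin d, j.1 < k → ∀ a b : E,
      ⟪w j, (U.orthogonalProjectionOnto a : E) + (Uᗮ.orthogonalProjectionOnto b : E)⟫ = ⟪w j, a⟫ := by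
    intro j hj a b
    conv_rhs => rw [← key a]
    rw [inner_add_right, inner_add_right,
      Submodule.inner_right_of_mem_orthogonal (hin j hj) (Uᗮ.orthogonalProjectionOnto b).2,
      Submodule.inner_right_of_mem_orthogonal (hin j hj) (Uᗮ.orthogonalProjectionOnto a).2]
  have c2 : ∀ j : Fin d, k ≤ j.1 → ∀ a b : E,
      ⟪w j, (U.orthogonalProjectionOnto a : E) + (Uᗮ.orthogonalProjectionOnto b : E)⟫ = ⟪w j, b⟫ := by
    intro j hj a b
    conv_rhs => rw [← key b]
    rw [inner_add_right, inner_add_right,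
      Submodule.inner_left_of_mem_orthogonal (U.orthogonalProjectionOnto b).2 (hout j hj),
      Submodule.inner_left_of_mem_orthogonal (U.orthogonalProjectionOnto a).2 (hout j hj)]
  ext x
  constructor
  · intro hx
    refine mem_add.mpr ⟨_, ⟨_, ⟨x, hx, rfl⟩, rfl⟩, _, ⟨_, ⟨x, hx, rfl⟩, rfl⟩, key x⟩
  · rintro ⟨_, ⟨_, ⟨a, ⟨⟨a1, a2, a3⟩, a4⟩, rfl⟩, rfl⟩, _, ⟨_, ⟨b, ⟨⟨b1, b2, b3⟩, b4⟩, rfl⟩, rfl⟩, rfl⟩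
    refine ⟨⟨fun i j hij => ?_, fun j => ?_, fun j hj => ?_⟩, fun j hj => ?_⟩
    · have hij' : i.1 ≤ j.1 := hij
      simp only
      rcases lt_or_ge i.1 k with hi | hi
      · rcases lt_or_ge j.1 k with hj | hj
        · rw [c1 i hi, c1 j hj]; exact a1 hij
        · rw [c1 i hi, c2 j hj]; exact (b4 j hj).trans (a3 i hi)
      · rw [c2 i hi, c2 j (hi.trans hij')]; exact b1 hij
    · rcases lt_or_ge j.1 k with hj | hj
      · rw [c1 j hj]; exact a2 j
      · rw [c2 j hj]; exact b2 j
    · rw [c1 j hj]; exact a3 j hj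
    · rw [c2 j hj]; exact b4 j hj

theorem lemmaD {q : Set E → ℝ} (hq : Cut q)
    (htr : ∀ (v : E) K, Body K → q ((fun x => v + x) '' K) = q K)
    (horth : ∀ U : Submodule ℝ E, U ≠ ⊥ → U ≠ ⊤ → ∀ (F : Set U) (G : Set Uᗮ), Body F → Body G →
      q (((↑) '' F : Set E) + ((↑) '' G : Set E)) = 0)
    (hw : OrthFam w) (hd : Module.finrank ℝ E = d) (h0 : 0 < d) :
    q ((2 : ℝ) • Sx w) = 2 * q (Sx w) := by
  have step : ∀ k, k < d → q (Tk w k) = q (Pk w k) + q (Tk w (k + 1)) := by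
    intro k hk
    have hl : innerSL ℝ (w ⟨k, hk⟩) ≠ 0 := by
      intro h
      have := congrArg (fun l : E →L[ℝ] ℝ => l (w ⟨k, hk⟩)) h
      simp at this
      exact hw.1 _ this
    rw [hq.cut _ (Tk_compact hw hd k) (Tk_convex k) _ 1 hl, Pk_eq hk, Tk_succ hk]
  have hrec : ∀ k, k < d → q (Tk w (k + 1)) = q (Tk w 1) := by
    intro k
    induction k with
    | zero => intro _; rfl
    | succ k ih =>
      intro hk
      rw [← ih (by omega), step (k + 1) hk, Pk_orth hq horth hw hd (by omega) hk, zero_add]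
  have h1 := step 0 h0
  rw [Tk_zero, Pk_zero, zero_add] at h1
  have h2 := hrec (d - 1) (by omega)
  rw [Nat.sub_add_cancel h0, Tk_last hw, htr _ _ (Sx_body hw hd h0)] at h2
  rw [h1, ← h2]; ring

end Dissect
end Hadwiger

set_option linter.unusedSectionVars false

namespace Hadwiger

open scoped Pointwise RealInnerProductSpace Topology

section Orth
variable {E : Type} [NormedAddCommGroup E] [InnerProductSpace ℝ E] [FiniteDimensional ℝ E]

/-- Unit cube of an orthonormal basis. -/
def cube {ι : Type} [Fintype ι] (b : OrthonormalBasis ι ℝ E) : Set E :=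
  {x | ∀ i, 0 ≤ ⟪b i, x⟫ ∧ ⟪b i, x⟫ ≤ 1}

theorem cube_body {ι : Type} [Fintype ι] (b : OrthonormalBasis ι ℝ E) : Body (cube b) := by
  have h : cube b = ⋂ i, ({x | 0 ≤ innerSL ℝ (b i) x} ∩ {x | innerSL ℝ (b i) x ≤ 1}) := by
    ext x; simp [cube]
  refine ⟨⟨0, by simp [cube]⟩, ?_, ?_⟩
  · refine Metric.isCompact_of_isClosed_isBounded ?_ ?_
    · rw [h]
      exact isClosed_iInter fun i => (isClosed_le continuous_const (by fun_prop)).inter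
        (isClosed_le (by fun_prop) continuous_const)
    · rw [isBounded_iff_forall_norm_le]
      refine ⟨∑ i : ι, 1, fun x hx => ?_⟩
      rw [← b.sum_repr' x]
      refine (norm_sum_le _ _).trans (Finset.sum_le_sum fun i _ => ?_)
      rw [norm_smul, b.orthonormal.1 i, mul_one, Real.norm_eq_abs, abs_le]
      have := hx i
      constructor <;> linarith
  · rw [h]
    exact convex_iInter fun i => (convex_halfSpace_ge (innerSL ℝ (b i)).isLinear _).inter
      (convex_halfSpace_le (innerSL ℝ (b i)).isLinear _)

theorem cube_congr {ι κ : Type} [Fintype ι] [Fintype κ] (b : OrthonormalBasis ι ℝ E)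
    (b' : OrthonormalBasis κ ℝ E) (e : ι ≃ κ) {f : Set E → ℝ} (hf : Nice f) :
    f (cube b') = f (cube b) := by
  rw [← hf.inv (b.equiv b' e) _ (cube_body b)]
  congr 1
  have hg : ∀ j (x : E), ⟪b' j, b.equiv b' e x⟫ = ⟪b (e.symm j), x⟫ := by
    intro j x
    rw [← (b.equiv b' e).inner_map_map (b (e.symm j)) x, OrthonormalBasis.equiv_apply_basis]
    simp
  ext x
  constructor
  · intro hx
    refine ⟨(b.equiv b' e).symm x, fun i => ?_, LinearIsometryEquiv.apply_symm_apply _ _⟩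
    have := hg (e i) ((b.equiv b' e).symm x)
    simp only [Equiv.symm_apply_apply, LinearIsometryEquiv.apply_symm_apply] at this
    rw [← this]
    exact hx _
  · rintro ⟨y, hy, rfl⟩ j
    rw [hg]
    exact hy _

/-- Orthogonal complementary pairs of subspaces (a symmetric notion). -/
structure OC (U V : Submodule ℝ E) : Prop where
  orth : ∀ u ∈ U, ∀ v ∈ V, ⟪u, v⟫ = 0
  sum : ∀ x : E, ∃ u ∈ U, ∃ v ∈ V, x = u + v

theorem OC.symm {U V : Submodule ℝ E} (h : OC U V) : OC V U :=
  ⟨fun v hv u hu => by rw [real_inner_comm]; exact h.orth u hu v hv,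
   fun x => let ⟨u, hu, v, hv, e⟩ := h.sum x; ⟨v, hv, u, hu, by rw [e, add_comm]⟩⟩

theorem OC.perp (U : Submodule ℝ E) : OC U Uᗮ := by
  refine ⟨fun u hu v hv => Submodule.inner_right_of_mem_orthogonal hu hv, fun x => ?_⟩
  refine ⟨U.starProjection x, Submodule.starProjection_apply_mem U x, x - U.starProjection x,
    Submodule.sub_starProjection_mem_orthogonal x, by abel⟩

variable {U V : Submodule ℝ E}

theorem OC.proj (h : OC U V) (u : U) (v : V) :
    U.orthogonalProjectionOnto ((u : E) + (v : E)) = u := by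
  have h1 : U.orthogonalProjectionOnto (v : E) = 0 := by
    rw [Submodule.orthogonalProjectionOnto_eq_zero_iff, Submodule.mem_orthogonal]
    exact fun x hx => h.orth x hx _ v.2
  rw [map_add, h1, Submodule.orthogonalProjectionOnto_mem_subspace_eq_self, add_zero]

/-- Extend an isometry of `U` by the identity on the complement. -/
theorem OC.extend (h : OC U V) (g : U ≃ₗᵢ[ℝ] U) : ∃ g' : E ≃ₗᵢ[ℝ] E,
    ∀ (u : U) (v : V), g' ((u : E) + v) = (g u : E) + v := by
  let P := U.orthogonalProjectionOnto
  let A : E →ₗ[ℝ] E := (U.subtype ∘ₗ g.toLinearEquiv.toLinearMap ∘ₗ P.toLinearMap) +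
    (LinearMap.id - U.subtype ∘ₗ P.toLinearMap)
  have hA : ∀ (u : U) (v : V), A ((u : E) + v) = (g u : E) + v := by
    intro u v
    change ((g (P (u + v)) : U) : E) + ((u : E) + v - (P (u + v) : U)) = _
    rw [h.proj u v]; abel
  have hn : ∀ x, ‖A x‖ = ‖x‖ := by
    intro x
    obtain ⟨u, hu, v, hv, rfl⟩ := h.sum x
    have e := hA ⟨u, hu⟩ ⟨v, hv⟩
    simp only at e
    rw [e, ← sq_eq_sq₀ (norm_nonneg _) (norm_nonneg _), sq, sq,
      norm_add_sq_eq_norm_sq_add_norm_sq_real (h.orth _ (g ⟨u, hu⟩).2 v hv),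
      norm_add_sq_eq_norm_sq_add_norm_sq_real (h.orth u hu v hv)]
    have : ‖((g ⟨u, hu⟩ : U) : E)‖ = ‖u‖ := by
      exact g.norm_map ⟨u, hu⟩
    rw [this]
  refine ⟨LinearIsometry.toLinearIsometryEquiv ⟨A, hn⟩ rfl, fun u v => ?_⟩
  exact hA u v

theorem OC.nice (h : OC U V) {f : Set E → ℝ} (hf : Nice f) {G : Set V} (hG : Body G) :
    Nice (fun F : Set U => f (((↑) '' F : Set E) + ((↑) '' G : Set E))) := by
  constructor
  · simp [hf.empty]
  · intro K L hK hL hc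
    have h1 : (((↑) '' (K ∪ L) : Set E) + ((↑) '' G : Set E)) =
        (((↑) '' K : Set E) + ((↑) '' G : Set E)) ∪ (((↑) '' L : Set E) + ((↑) '' G : Set E)) := by
      rw [image_union, union_add]
    have h2 : (((↑) '' (K ∩ L) : Set E) + ((↑) '' G : Set E)) =
        (((↑) '' K : Set E) + ((↑) '' G : Set E)) ∩ (((↑) '' L : Set E) + ((↑) '' G : Set E)) := by
      ext x
      constructor
      · rintro ⟨_, ⟨u, ⟨hu, hu'⟩, rfl⟩, _, ⟨v, hv, rfl⟩, rfl⟩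
        exact ⟨add_mem_add ⟨u, hu, rfl⟩ ⟨v, hv, rfl⟩, add_mem_add ⟨u, hu', rfl⟩ ⟨v, hv, rfl⟩⟩
      · rintro ⟨⟨_, ⟨u, hu, rfl⟩, _, ⟨v, hv, rfl⟩, rfl⟩, ⟨_, ⟨u', hu', rfl⟩, _, ⟨v', hv', rfl⟩, e⟩⟩
        have e1 := h.proj u v
        have e2 := h.proj u' v'
        simp only at e
        rw [e, e1] at e2
        subst e2
        exact add_mem_add ⟨u, ⟨hu, hu'⟩, rfl⟩ ⟨v, hv, rfl⟩
    rw [h1, h2]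
    refine hf.val _ _ (hK.coe.add hG.coe) (hL.coe.add hG.coe) ?_
    rw [← h1]
    exact (hc.linear_image U.subtype).add hG.coe.2.2
  · intro K hK l c hl hlc
    refine hf.simple _ (hK.coe.add hG.coe) (l.comp U.orthogonalProjectionOnto) c ?_ ?_
    · intro h0
      apply hl
      ext u
      have := congrArg (fun m : E →L[ℝ] ℝ => m u) h0
      simpa using this
    · rintro _ ⟨_, ⟨u, hu, rfl⟩, _, ⟨v, hv, rfl⟩, rfl⟩
      rw [ContinuousLinearMap.comp_apply]
      simp only
      rw [h.proj]
      exact hlc u hu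
  · intro K L hK hL hl
    exact hf.scont _ _ (fun m => (hK m).coe.add hG.coe) (hL.coe.add hG.coe)
      ((CLim.coe hl).add (CLim.const _))
  · intro g K hK
    obtain ⟨g', hg'⟩ := h.extend g
    rw [← hf.inv g' _ (hK.coe.add hG.coe)]
    congr 1
    ext x
    constructor
    · rintro ⟨_, ⟨_, ⟨u, hu, rfl⟩, rfl⟩, _, ⟨v, hv, rfl⟩, rfl⟩
      exact ⟨_, add_mem_add ⟨u, hu, rfl⟩ ⟨v, hv, rfl⟩, hg' u v⟩
    · rintro ⟨_, ⟨_, ⟨u, hu, rfl⟩, _, ⟨v, hv, rfl⟩, rfl⟩, rfl⟩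
      simp only
      rw [hg']
      exact add_mem_add ⟨_, ⟨u, hu, rfl⟩, rfl⟩ ⟨v, hv, rfl⟩
  · intro v K hK
    rw [← hf.trans (v : E) _ (hK.coe.add hG.coe)]
    congr 1
    rw [trans_eq _ (v : E), ← add_assoc]
    congr 1
    ext x
    constructor
    · rintro ⟨_, ⟨u, hu, rfl⟩, rfl⟩
      exact add_mem_add rfl ⟨u, hu, rfl⟩
    · rintro ⟨_, rfl, _, ⟨u, hu, rfl⟩, rfl⟩
      exact ⟨_, ⟨u, hu, rfl⟩, by simp⟩

/-- The inductive statement. -/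
def ZProp (n : ℕ) : Prop :=
  ∀ (E : Type) [NormedAddCommGroup E] [InnerProductSpace ℝ E] [FiniteDimensional ℝ E],
    Module.finrank ℝ E = n → ∀ f : Set E → ℝ, Nice f →
    ∀ (b : OrthonormalBasis (Fin n) ℝ E), f (cube b) = 0 → ∀ K, Body K → f K = 0

theorem ZProp.use {r : ℕ} (h : ZProp r) (hr : Module.finrank ℝ E = r) {f : Set E → ℝ} (hf : Nice f)
    (h0 : f (cube (stdOrthonormalBasis ℝ E)) = 0) {K : Set E} (hK : Body K) : f K = 0 := by
  subst hr
  exact h E rfl f hf _ h0 K hK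

theorem orth_zero {n : ℕ} (ih : ∀ m < n, ZProp m) (hE : Module.finrank ℝ E = n) {f : Set E → ℝ}
    (hf : Nice f) (b : OrthonormalBasis (Fin n) ℝ E) (hb : f (cube b) = 0)
    {U : Submodule ℝ E} (hU0 : U ≠ ⊥) (hU1 : U ≠ ⊤) {F : Set U} {G : Set Uᗮ} (hF : Body F)
    (hG : Body G) : f (((↑) '' F : Set E) + ((↑) '' G : Set E)) = 0 := by
  have hs : Module.finrank ℝ U + Module.finrank ℝ Uᗮ = n := by
    rw [Submodule.finrank_add_finrank_orthogonal, hE]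
  have h1 : Module.finrank ℝ U < n := by rw [← hE]; exact Submodule.finrank_lt hU1
  have h2 : Module.finrank ℝ U ≠ 0 := by
    intro h; exact hU0 (Submodule.finrank_eq_zero.mp h)
  have hoc := OC.perp U
  set bU := stdOrthonormalBasis ℝ U
  set bV := stdOrthonormalBasis ℝ Uᗮ
  have key : f (((↑) '' (cube bU) : Set E) + ((↑) '' (cube bV) : Set E)) = 0 := by
    let c : Fin (Module.finrank ℝ U) ⊕ Fin (Module.finrank ℝ Uᗮ) → E :=
      Sum.elim (fun i => (bU i : E)) (fun i => (bV i : E))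
    have hc : Orthonormal ℝ c := by
      constructor
      · rintro (i | i)
        · exact bU.orthonormal.1 i
        · exact bV.orthonormal.1 i
      · rintro (i | i) (j | j) hij
        · exact bU.orthonormal.2 (fun h => hij (by rw [h]))
        · exact hoc.orth _ (bU i).2 _ (bV j).2
        · exact hoc.symm.orth _ (bV i).2 _ (bU j).2
        · exact bV.orthonormal.2 (fun h => hij (by rw [h]))
    obtain ⟨b', hb'⟩ := Orthonormal.exists_orthonormalBasis_extension_of_card_eq (𝕜 := ℝ)
      (v := c) (s := univ) (by simp [hE, hs])
      (by exact hc.comp _ Subtype.val_injective)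
    have e : Fin n ≃ Fin (Module.finrank ℝ U) ⊕ Fin (Module.finrank ℝ Uᗮ) :=
      Fintype.equivOfCardEq (by simp [hs])
    rw [← hb, ← cube_congr b b' e hf]
    congr 1
    ext x
    constructor
    · rintro ⟨_, ⟨u, hu, rfl⟩, _, ⟨v, hv, rfl⟩, rfl⟩ i
      rw [hb' i (mem_univ i)]
      simp only
      rcases i with i | i
      · rw [inner_add_right, show c (Sum.inl i) = (bU i : E) from rfl,
          hoc.orth _ (bU i).2 _ v.2, add_zero]
        exact hu i
      · rw [inner_add_right, show c (Sum.inr i) = (bV i : E) from rfl,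
          hoc.symm.orth _ (bV i).2 _ u.2, zero_add]
        exact hv i
    · intro hx
      obtain ⟨u, hu, v, hv, rfl⟩ := hoc.sum x
      refine add_mem_add ⟨⟨u, hu⟩, fun i => ?_, rfl⟩ ⟨⟨v, hv⟩, fun i => ?_, rfl⟩
      · have := hx (Sum.inl i)
        rw [hb' _ (mem_univ _), inner_add_right, show c (Sum.inl i) = (bU i : E) from rfl,
          hoc.orth _ (bU i).2 _ hv, add_zero] at this
        exact this
      · have := hx (Sum.inr i)
        rw [hb' _ (mem_univ _), inner_add_right, show c (Sum.inr i) = (bV i : E) from rfl,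
          hoc.symm.orth _ (bV i).2 _ hu, zero_add] at this
        exact this
  have stepA : f (((↑) '' (cube bU) : Set E) + ((↑) '' G : Set E)) = 0 := by
    have hN := hoc.symm.nice hf (cube_body bU)
    have := (ih _ (by omega)).use rfl hN (by rw [add_comm]; exact key) hG
    rw [add_comm]; exact this
  exact (ih _ h1).use rfl (hoc.nice hf hG) stepA hF

end Orth
end Hadwiger

set_option linter.unusedSectionVars false

namespace Hadwiger

open scoped Pointwise RealInnerProductSpace Topology

section Hom
variable {E : Type} [NormedAddCommGroup E] [InnerProductSpace ℝ E] [FiniteDimensional ℝ E]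

theorem smul_half {K : Set E} (l : E →L[ℝ] ℝ) (c : ℝ) :
    (2 : ℝ) • (K ∩ {x | l x ≤ c}) = (2 : ℝ) • K ∩ {x | l x ≤ 2 * c} := by
  rw [smul_set_inter₀ two_ne_zero]
  congr 1
  ext x
  rw [mem_smul_set_iff_inv_smul_mem₀ two_ne_zero]
  simp only [mem_ofPred_eq, map_smul, smul_eq_mul]
  constructor <;> intro h <;> linarith

theorem smul_half' {K : Set E} (l : E →L[ℝ] ℝ) (c : ℝ) :
    (2 : ℝ) • (K ∩ {x | c ≤ l x}) = (2 : ℝ) • K ∩ {x | 2 * c ≤ l x} := by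
  rw [smul_set_inter₀ two_ne_zero]
  congr 1
  ext x
  rw [mem_smul_set_iff_inv_smul_mem₀ two_ne_zero]
  simp only [mem_ofPred_eq, map_smul, smul_eq_mul]
  constructor <;> intro h <;> linarith

theorem homog {f : Set E → ℝ} (hf : Nice f) (h0 : 0 < Module.finrank ℝ E)
    (horth : ∀ U : Submodule ℝ E, U ≠ ⊥ → U ≠ ⊤ → ∀ (F : Set U) (G : Set Uᗮ), Body F → Body G →
      f (((↑) '' F : Set E) + ((↑) '' G : Set E)) = 0) {K : Set E} (hK : Body K) :
    f ((2 : ℝ) • K) = 2 * f K := by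
  let q : Set E → ℝ := fun K => f ((2 : ℝ) • K) - 2 * f K
  have hq : Cut q := by
    constructor
    · simp [q, hf.empty]
    · intro K hK hc l c hl
      simp only [q]
      rw [smul_half, smul_half', hf.cut.cut K hK hc l c hl,
        hf.cut.cut _ (hK.smul (2 : ℝ)) (hc.smul (2 : ℝ)) l (2 * c) hl]
      ring
  have hcont : SCont q := by
    intro K L hK hL hl
    exact (hf.scont _ _ (fun m => (hK m).smul 2) (hL.smul 2) (hl.smul 2)).sub
      ((hf.scont _ _ hK hL hl).const_mul 2)
  have := poly_to_body hcont (gen _ _ rfl q hq (fun w hw => by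
    change f ((2 : ℝ) • Sx w) - 2 * f (Sx w) = 0
    rw [lemmaD hf.cut hf.trans horth hw rfl h0, sub_self])) hK
  simp only [q] at this
  linarith

theorem homog_pow {f : Set E → ℝ} (h : ∀ K, Body K → f ((2 : ℝ) • K) = 2 * f K) (j : ℕ) {K : Set E}
    (hK : Body K) : f ((2 : ℝ) ^ j • K) = 2 ^ j * f K := by
  induction j with
  | zero => simp
  | succ j ih =>
    rw [pow_succ', mul_smul, h _ (hK.smul _), ih]; ring

end Hom

section Add
variable {E : Type} [NormedAddCommGroup E] [InnerProductSpace ℝ E] [FiniteDimensional ℝ E]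

/-- Additivity in the second summand for bodies in `d`-dimensional subspaces. -/
def AddP (f : Set E → ℝ) (d : ℕ) : Prop :=
  ∀ W : Submodule ℝ E, Module.finrank ℝ W ≤ d → ∀ L, Body L → (∀ x ∈ L, x ∈ W) →
    ∀ K, Body K → f (K + L) = f K + f L

theorem AddP.affine {f : Set E → ℝ} (hf : Nice f) {d : ℕ} (h : AddP f d) {W : Submodule ℝ E}
    (hW : Module.finrank ℝ W ≤ d) {L : Set E} (hL : Body L) (a : E) (ha : ∀ x ∈ L, x - a ∈ W)
    {K : Set E} (hK : Body K) : f (K + L) = f K + f L := by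
  have h1 := h W hW _ (hL.translate (-a)) (by
    rintro _ ⟨x, hx, rfl⟩
    simp only
    rw [neg_add_eq_sub]
    exact ha x hx) K hK
  rw [hf.trans _ _ hL] at h1
  rw [← h1, ← hf.trans (-a) _ (hK.add hL)]
  congr 1
  rw [trans_eq, trans_eq, ← add_assoc, ← add_assoc, add_comm K]

theorem Sx_smul {d : ℕ} {w : Fin d → E} {c : ℝ} (hc : 0 < c) :
    c • Sx w = Sx (fun j => c⁻¹ • w j) := by
  ext x
  rw [mem_smul_set_iff_inv_smul_mem₀ hc.ne']
  simp only [Sx, mem_ofPred_eq, inner_smul_right, inner_smul_left]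
  simp

theorem OrthFam.smul {d : ℕ} {w : Fin d → E} (hw : OrthFam w) {c : ℝ} (hc : c ≠ 0) :
    OrthFam (fun j => c • w j) :=
  ⟨fun i => smul_ne_zero hc (hw.1 i), fun i j hij => by
    simp only [inner_smul_left, inner_smul_right, hw.2 i j hij, mul_zero]⟩

theorem coe_smul_set (W : Submodule ℝ E) (c : ℝ) (F : Set W) :
    ((↑) '' (c • F) : Set E) = c • ((↑) '' F : Set E) := by
  exact image_smul_set (f := W.subtype) c F

theorem coe_add_set (W : Submodule ℝ E) (F G : Set W) :
    ((↑) '' (F + G) : Set E) = ((↑) '' F : Set E) + ((↑) '' G : Set E) :=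
  image_add W.subtype

open Classical in
theorem addP_succ {f : Set E → ℝ} (hf : Nice f)
    (h2 : ∀ K, Body K → f ((2 : ℝ) • K) = 2 * f K) {d : ℕ} (ih : AddP f d) : AddP f (d + 1) := by
  intro W hW L hL hLW K hK
  rcases Nat.lt_succ_iff_lt_or_eq.mp (Nat.lt_succ_of_le hW) with hlt | hd
  · exact ih W (by omega) L hL hLW K hK
  let q : Set W → ℝ := fun F => if F = ∅ then 0 else f (K + ((↑) '' F : Set E)) - f K - f ((↑) '' F)
  have qb : ∀ F : Set W, Body F → q F = f (K + ((↑) '' F : Set E)) - f K - f ((↑) '' F) := by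
    intro F hF
    simp only [q]
    rw [if_neg hF.1.ne_empty]
  have qcut : Cut q := by
    refine Cut.mk' (by simp [q]) ?_
    intro F hF l c hl h1 h2 hun h3 hinter
    rw [qb F hF, qb _ h1, qb _ h2]
    set F1 := F ∩ {x | l x ≤ c} with hF1
    set F2 := F ∩ {x | c ≤ l x} with hF2
    set F0 := F ∩ {x | l x = c} with hF0
    have e1 : f ((↑) '' F) = f ((↑) '' F1) + f ((↑) '' F2) - f ((↑) '' F0) := by
      have := hf.val _ _ h1.coe h2.coe (by rw [← image_union, hun]; exact hF.coe.2.2)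
      rw [← image_union, hun, ← image_inter Subtype.val_injective, hinter] at this
      exact this
    have e2 : f (K + ((↑) '' F : Set E)) = f (K + ((↑) '' F1 : Set E)) + f (K + ((↑) '' F2 : Set E))
        - f (K + ((↑) '' F0 : Set E)) := by
      have u : K + ((↑) '' F : Set E) = (K + ((↑) '' F1 : Set E)) ∪ (K + ((↑) '' F2 : Set E)) := by
        rw [← add_union, ← image_union, hun]
      have i : K + ((↑) '' F0 : Set E) = (K + ((↑) '' F1 : Set E)) ∩ (K + ((↑) '' F2 : Set E)) := by
        ext x
        constructor
        · rintro ⟨k, hk, _, ⟨a, ha, rfl⟩, rfl⟩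
          rw [← hinter] at ha
          exact ⟨add_mem_add hk ⟨a, ha.1, rfl⟩, add_mem_add hk ⟨a, ha.2, rfl⟩⟩
        · rintro ⟨⟨k, hk, _, ⟨a, ha, rfl⟩, rfl⟩, ⟨k', hk', _, ⟨b, hb, rfl⟩, e⟩⟩
          simp only at e
          obtain ⟨s, t, hs, ht, hst, hstc⟩ : ∃ s t : ℝ, 0 ≤ s ∧ 0 ≤ t ∧ s + t = 1 ∧
              s * l a + t * l b = c := by
            have hca : l a ≤ c := ha.2
            have hcb : c ≤ l b := hb.2
            rcases hca.eq_or_lt with h | h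
            · exact ⟨1, 0, zero_le_one, le_rfl, by simp, by simp [h]⟩
            · have hp : 0 < l b - l a := by linarith
              refine ⟨(l b - c) / (l b - l a), (c - l a) / (l b - l a),
                div_nonneg (by linarith) hp.le, div_nonneg (by linarith) hp.le, ?_, ?_⟩
              · field_simp; ring
              · field_simp; ring
          refine mem_add.mpr ⟨s • k + t • k', hK.2.2 hk hk' hs ht hst, _,
            ⟨s • a + t • b, ⟨hF.2.2 ha.1 hb.1 hs ht hst, ?_⟩, rfl⟩, ?_⟩
          · simp only [mem_ofPred_eq, map_add, map_smul, smul_eq_mul]; exact hstc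
          · simp only [Submodule.coe_add, Submodule.coe_smul]
            have : s • k + t • k' + (s • (a : E) + t • (b : E)) =
              s • (k + (a : E)) + t • (k' + (b : E)) := by
              simp only [smul_add]; abel
            rw [this, e, ← add_smul, hst, one_smul]
      rw [u, i]
      refine hf.val _ _ (hK.add h1.coe) (hK.add h2.coe) ?_
      rw [← u]; exact (hK.add hF.coe).2.2
    have e3 : f (K + ((↑) '' F0 : Set E)) = f K + f ((↑) '' F0) := by
      obtain ⟨a, ha⟩ := h3.1
      refine ih.affine hf (W := (LinearMap.ker l.toLinearMap).map W.subtype) ?_ h3.coe (a : E) ?_ hK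
      · have : LinearMap.ker l.toLinearMap ≠ ⊤ := by
          intro h
          apply hl
          ext x
          have : x ∈ LinearMap.ker l.toLinearMap := by rw [h]; trivial
          simpa using this
        have := Submodule.finrank_lt this
        have h' := Submodule.finrank_map_le W.subtype (LinearMap.ker l.toLinearMap)
        omega
      · rintro _ ⟨x, hx, rfl⟩
        refine ⟨x - a, ?_, rfl⟩
        have e1 : l x = c := hx.2
        have e2 : l a = c := ha.2
        simp [e1, e2]
    rw [e1, e2, e3]; ring
  have qtr : ∀ (v : W) F, Body F → q ((fun x => v + x) '' F) = q F := by
    intro v F hF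
    have e : ((↑) '' ((fun x => v + x) '' F) : Set E) = (fun x => (v : E) + x) '' ((↑) '' F) := by
      rw [image_image, image_image]; rfl
    rw [qb F hF, qb _ (hF.translate v), e, hf.trans _ _ hF.coe]
    have e' : K + (fun x => (v : E) + x) '' ((↑) '' F) =
        (fun x => (v : E) + x) '' (K + ((↑) '' F : Set E)) := by
      rw [trans_eq, trans_eq, ← add_assoc, ← add_assoc, add_comm K]
    rw [e', hf.trans _ _ (hK.add hF.coe)]
  have qorth : ∀ U : Submodule ℝ W, U ≠ ⊥ → U ≠ ⊤ → ∀ (F : Set U) (G : Set Uᗮ), Body F → Body G →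
      q (((↑) '' F : Set W) + ((↑) '' G : Set W)) = 0 := by
    intro U hU0 hU1 F G hF hG
    have hs := Submodule.finrank_add_finrank_orthogonal U
    have hU2 : Module.finrank ℝ U ≠ 0 := fun h => hU0 (Submodule.finrank_eq_zero.mp h)
    have hU3 := Submodule.finrank_lt hU1
    have aF : ∀ K, Body K → f (K + ((↑) '' ((↑) '' F : Set W) : Set E)) = f K + f ((↑) '' ((↑) '' F : Set W)) := by
      refine ih (U.map W.subtype) ?_ _ hF.coe.coe ?_
      · have := Submodule.finrank_map_le W.subtype U
        omega
      · rintro _ ⟨_, ⟨u, hu, rfl⟩, rfl⟩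
        exact ⟨u, u.2, rfl⟩
    have aG : ∀ K, Body K → f (K + ((↑) '' ((↑) '' G : Set W) : Set E)) = f K + f ((↑) '' ((↑) '' G : Set W)) := by
      refine ih (Uᗮ.map W.subtype) ?_ _ hG.coe.coe ?_
      · have := Submodule.finrank_map_le W.subtype Uᗮ
        omega
      · rintro _ ⟨_, ⟨u, hu, rfl⟩, rfl⟩
        exact ⟨u, u.2, rfl⟩
    rw [qb _ (hF.coe.add hG.coe), coe_add_set, ← add_assoc, aG _ (hK.add hF.coe.coe), aF _ hK,
      aG _ hF.coe.coe]
    ring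
  have q2 : ∀ (j : ℕ) (w : Fin (d + 1) → W), OrthFam w → q ((2 : ℝ) ^ j • Sx w) = 2 ^ j * q (Sx w) := by
    intro j
    induction j with
    | zero => intro w hw; simp
    | succ j ihj =>
      intro w hw
      have hp : (0 : ℝ) < 2 ^ j := by positivity
      rw [pow_succ', mul_smul, Sx_smul hp,
        lemmaD qcut qtr qorth (hw.smul (inv_ne_zero hp.ne')) hd (by omega), ← Sx_smul hp, ihj w hw]
      ring
  have qS : ∀ w : Fin (d + 1) → W, OrthFam w → q (Sx w) = 0 := by
    intro w hw
    have hS := Sx_body hw hd (by omega)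
    set S : Set E := (↑) '' Sx w with hSdef
    have hSb : Body S := hS.coe
    have formula : ∀ j : ℕ, q (Sx w) = f ((2⁻¹ : ℝ) ^ j • K + S) - (2⁻¹ : ℝ) ^ j * f K - f S := by
      intro j
      have hp : (0 : ℝ) < 2 ^ j := by positivity
      have e1 := q2 j w hw
      rw [qb _ (hS.smul _), coe_smul_set] at e1
      have e2 : K + (2 : ℝ) ^ j • S = (2 : ℝ) ^ j • ((2⁻¹ : ℝ) ^ j • K + S) := by
        rw [smul_add, smul_smul, ← mul_pow, mul_inv_cancel₀ two_ne_zero, one_pow, one_smul]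
      rw [e2, homog_pow h2 j ((hK.smul _).add hSb), homog_pow h2 j hSb] at e1
      generalize f ((2⁻¹ : ℝ) ^ j • K + S) = X at e1 ⊢
      rw [inv_pow]
      field_simp
      linarith
    have t0 : Tendsto (fun j : ℕ => (2⁻¹ : ℝ) ^ j) atTop (𝓝 0) :=
      tendsto_pow_atTop_nhds_zero_of_lt_one (by norm_num) (by norm_num)
    have t1 := (CLim.scale hK.2.1 t0).add (CLim.const S)
    have e0 : (0 : ℝ) • K + S = S := by
      rw [zero_smul_set hK.1, zero_add]
    rw [e0] at t1
    have t2 := hf.scont _ _ (fun m => (hK.smul _).add hSb) hSb t1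
    have t3 := (t2.sub (t0.mul_const (f K))).sub_const (f S)
    have t4 : Tendsto (fun _ : ℕ => q (Sx w)) atTop (𝓝 (f S - 0 * f K - f S)) := by
      refine t3.congr fun j => ?_
      exact (formula j).symm
    have := tendsto_nhds_unique t4 tendsto_const_nhds
    rw [← this]; ring
  have qcont : SCont q := by
    intro F G hF hG hl
    rw [qb G hG]
    simp only [fun m => qb (F m) (hF m)]
    refine ((hf.scont _ _ (fun m => hK.add (hF m).coe) (hK.add hG.coe)
      ((CLim.const K).add hl.coe)).sub_const _).sub ?_
    exact hf.scont _ _ (fun m => (hF m).coe) hG.coe hl.coe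
  have hLe : ((↑) '' ((↑) ⁻¹' L : Set W) : Set E) = L := by
    rw [image_preimage_eq_inter_range, inter_eq_left]
    intro x hx
    exact ⟨⟨x, hLW x hx⟩, rfl⟩
  have hLb : Body ((↑) ⁻¹' L : Set W) := by
    refine ⟨?_, ?_, hL.2.2.linear_preimage W.subtype⟩
    · obtain ⟨x, hx⟩ := hL.1
      exact ⟨⟨x, hLW x hx⟩, hx⟩
    · exact (Submodule.closed_of_finiteDimensional W).isClosedEmbedding_subtypeVal.isCompact_preimage
        hL.2.1
  have := poly_to_body qcont (gen _ _ hd q qcut qS) hLb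
  rw [qb _ hLb, hLe] at this
  linarith

theorem additive {f : Set E → ℝ} (hf : Nice f) (h0 : 0 < Module.finrank ℝ E)
    (h2 : ∀ K, Body K → f ((2 : ℝ) • K) = 2 * f K) {K L : Set E} (hK : Body K) (hL : Body L) :
    f (K + L) = f K + f L := by
  have : ∀ d, AddP f d := by
    intro d
    induction d with
    | zero =>
      intro W hW L hL hLW K hK
      have hW' : W = ⊥ := Submodule.finrank_eq_zero.mp (by omega)
      have : L = {0} := by
        refine (subset_singleton_iff_eq.mp fun x hx => ?_).resolve_left hL.1.ne_empty
        have := hLW x hx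
        rw [hW'] at this
        simpa using this
      rw [this, hf.cut.singleton h0, singleton_zero, add_zero, add_zero]
    | succ d ih => exact addP_succ hf h2 ih
  exact this _ ⊤ le_rfl L hL (fun x _ => trivial) K hK

end Add
end Hadwiger

set_option linter.unusedSectionVars false

namespace Hadwiger

open scoped Pointwise RealInnerProductSpace Topology

section Avg
variable {E : Type} [NormedAddCommGroup E] [InnerProductSpace ℝ E] [FiniteDimensional ℝ E]

theorem zero_scal {f : Set E → ℝ} (hs : ∀ x, f {x} = 0)
    (ha : ∀ K L, Body K → Body L → f (K + L) = f K + f L) (k : ℕ) {K : Set E} (hK : Body K) :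
    f ((k : ℝ) • K) = k * f K := by
  induction k with
  | zero =>
    have : ((0 : ℕ) : ℝ) • K = {0} := by
      rw [Nat.cast_zero, zero_smul_set hK.1, singleton_zero]
    rw [this, hs]; simp
  | succ k ih =>
    rw [Nat.cast_succ, hK.2.2.add_smul (by positivity) (by positivity), one_smul,
      ha _ _ (hK.smul _) hK, ih]
    ring

theorem sum_body {ι : Type} (t : Finset ι) (A : ι → Set E) (hA : ∀ i, Body (A i)) :
    Body (∑ i ∈ t, A i) := by
  classical
  induction t using Finset.induction_on with
  | empty => simp only [Finset.sum_empty]; exact Body.single (0 : E)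
  | insert i t hi ih => rw [Finset.sum_insert hi]; exact (hA i).add ih

theorem sum_val {f : Set E → ℝ} (hs : ∀ x, f {x} = 0)
    (ha : ∀ K L, Body K → Body L → f (K + L) = f K + f L) {ι : Type} (t : Finset ι) (A : ι → Set E)
    (hA : ∀ i, Body (A i)) : f (∑ i ∈ t, A i) = ∑ i ∈ t, f (A i) := by
  classical
  induction t using Finset.induction_on with
  | empty => simp only [Finset.sum_empty]; exact hs 0
  | insert i t hi ih =>
    rw [Finset.sum_insert hi, Finset.sum_insert hi, ha _ _ (hA i) (sum_body t A hA), ih]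

theorem improve [Nontrivial E] {f : Set E → ℝ} (hf : Nice f) (hs : ∀ x, f {x} = 0)
    (ha : ∀ K L, Body K → Body L → f (K + L) = f K + f L) {R δ : ℝ} (hR : 0 ≤ R) (hδ : 0 < δ) :
    ∃ η > 0, ∀ r L, 0 ≤ r → r ≤ R → Body L → closedBall 0 r ⊆ L → L ⊆ closedBall 0 R →
      (∃ x ∈ L, r + δ ≤ ‖x‖) →
      ∃ L', Body L' ∧ closedBall 0 (r + η) ⊆ L' ∧ L' ⊆ closedBall 0 R ∧ f L' = f L := by
  classical
  set c : ℝ := (R + δ / 2) / (R + δ) with hc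
  have hc1 : c < 1 := by rw [hc, div_lt_one (by positivity)]; linarith
  have hc0 : 0 < c := by positivity
  obtain ⟨t, ht1, ht2⟩ := (isCompact_sphere (0 : E) 1).elim_nhds_subcover
    (fun v => {u | c < ⟪u, v⟫}) (by
      intro v hv
      refine (isOpen_lt continuous_const (by fun_prop)).mem_nhds ?_
      rw [mem_sphere_zero_iff_norm] at hv
      rw [mem_ofPred_eq, real_inner_self_eq_norm_sq, hv]; simpa using hc1)
  have htne : t.Nonempty := by
    obtain ⟨u, hu⟩ := NormedSpace.sphere_nonempty (E := E) (x := 0) (r := 1) |>.mpr zero_le_one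
    obtain ⟨v, hv, -⟩ := mem_iUnion₂.mp (ht2 hu)
    exact ⟨v, hv⟩
  set m : ℝ := (t.card : ℝ) with hm
  have hmpos : 0 < m := by rw [hm]; exact_mod_cast htne.card_pos
  refine ⟨δ / 2 / m, by positivity, ?_⟩
  rintro r L hr hrR hL hrL hLR ⟨x, hx, hxr⟩
  have hρ : ∀ v : E, ∃ ρ : E ≃ₗᵢ[ℝ] E, v ∈ t → ρ x = ‖x‖ • v := by
    intro v
    by_cases hv : v ∈ t
    · refine ⟨(Submodule.span ℝ {x - ‖x‖ • v})ᗮ.reflection, fun _ => Submodule.reflection_sub ?_⟩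
      have := ht1 v hv
      rw [mem_sphere_zero_iff_norm] at this
      rw [norm_smul, this]; simp
    · exact ⟨LinearIsometryEquiv.refl ℝ E, fun h => absurd h hv⟩
  choose ρ hρ using hρ
  have hA : ∀ v, Body (ρ v '' L) := fun v => hL.iso (ρ v)
  have hB := sum_body t (fun v => ρ v '' L) hA
  have hmem : ∀ g : E → E, (∀ v ∈ t, g v ∈ ρ v '' L) →
      m⁻¹ • ∑ v ∈ t, g v ∈ m⁻¹ • ∑ v ∈ t, ρ v '' L := fun g hg =>
    smul_mem_smul_set (Set.finsetSum_mem_finsetSum t _ _ hg)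
  refine ⟨m⁻¹ • ∑ v ∈ t, ρ v '' L, hB.smul _, ?_, ?_, ?_⟩
  · intro y hy
    by_contra hcon
    obtain ⟨l, u, h1, h2⟩ := geometric_hahn_banach_closed_point (hB.smul m⁻¹).2.2
      (hB.smul m⁻¹).2.1.isClosed hcon
    obtain ⟨p, rfl⟩ : ∃ p, innerSL ℝ p = l :=
      ⟨(InnerProductSpace.toDual ℝ E).symm l, by ext x; simp⟩
    simp only [innerSL_apply_apply] at h1 h2
    have hp : p ≠ 0 := by
      rintro rfl
      obtain ⟨z, hz⟩ := (hB.smul m⁻¹).1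
      have := h1 z hz
      simp at this h2
      linarith
    have hpn : 0 < ‖p‖ := norm_pos_iff.mpr hp
    set û : E := ‖p‖⁻¹ • p with hu
    have hun : ‖û‖ = 1 := by rw [hu, norm_smul, norm_inv, norm_norm, inv_mul_cancel₀ hpn.ne']
    have hpu : p = ‖p‖ • û := by rw [hu, smul_smul, mul_inv_cancel₀ hpn.ne', one_smul]
    obtain ⟨v₀, hv₀, hv₀'⟩ := mem_iUnion₂.mp (ht2 (mem_sphere_zero_iff_norm.mpr hun))
    rw [mem_ofPred_eq] at hv₀'
    let g : E → E := fun v => if v = v₀ then ‖x‖ • v₀ else r • û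
    have hg : ∀ v ∈ t, g v ∈ ρ v '' L := by
      intro v hv
      by_cases h : v = v₀
      · subst h
        simp only [g, if_true]
        exact ⟨x, hx, hρ v hv⟩
      · simp only [g, if_neg h]
        refine ⟨(ρ v).symm (r • û), hrL ?_, LinearIsometryEquiv.apply_symm_apply _ _⟩
        rw [mem_closedBall_zero_iff, LinearIsometryEquiv.norm_map, norm_smul, hun,
          Real.norm_of_nonneg hr, mul_one]
    have h3 := h1 _ (hmem g hg)
    have h4 : ∀ v ∈ t, ‖p‖ * (r + if v = v₀ then δ / 2 else 0) ≤ ⟪p, g v⟫ := by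
      intro v hv
      by_cases h : v = v₀
      · subst h
        simp only [g, if_true, inner_smul_right]
        have e : ⟪p, v⟫ = ‖p‖ * ⟪û, v⟫ := by
          conv_lhs => rw [hpu]
          rw [inner_smul_left]; simp
        have k1 : r + δ / 2 ≤ (r + δ) * c := by
          rw [hc, mul_div_assoc', le_div_iff₀ (by positivity)]
          nlinarith
        have k2 : (r + δ) * c ≤ ‖x‖ * ⟪û, v⟫ := by gcongr
        rw [e]
        nlinarith
      · simp only [g, if_neg h, inner_smul_right, add_zero]
        have e : ⟪p, û⟫ = ‖p‖ := by
          rw [hu, inner_smul_right, real_inner_self_eq_norm_sq]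
          field_simp
        rw [e, mul_comm]
    have h5 := Finset.sum_le_sum h4
    rw [← Finset.mul_sum, Finset.sum_add_distrib, Finset.sum_const, nsmul_eq_mul,
      Finset.sum_ite_eq' t v₀, if_pos hv₀, ← inner_sum] at h5
    rw [inner_smul_right] at h3
    have h6 : ‖p‖ * (r + δ / 2 / m) ≤ m⁻¹ * ⟪p, ∑ v ∈ t, g v⟫ := by
      rw [inv_mul_eq_div, le_div_iff₀ hmpos]
      refine le_trans (le_of_eq ?_) h5
      rw [← hm]; field_simp
    have h7 : ⟪p, y⟫ ≤ ‖p‖ * (r + δ / 2 / m) := by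
      refine (real_inner_le_norm p y).trans ?_
      gcongr
      exact mem_closedBall_zero_iff.mp hy
    linarith
  · rintro _ ⟨z, hz, rfl⟩
    obtain ⟨g, hg, rfl⟩ := (Set.mem_finsetSum _ _ _).mp hz
    rw [mem_closedBall_zero_iff]
    simp only
    rw [norm_smul, norm_inv, Real.norm_of_nonneg hmpos.le, inv_mul_eq_div, div_le_iff₀ hmpos]
    refine (norm_sum_le _ _).trans ?_
    refine (Finset.sum_le_card_nsmul _ _ R ?_).trans (le_of_eq ?_)
    · intro v hv
      obtain ⟨z, hz, hz'⟩ := hg hv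
      rw [← hz', LinearIsometryEquiv.norm_map]
      exact mem_closedBall_zero_iff.mp (hLR hz)
    · rw [nsmul_eq_mul, mul_comm]
  · have e := zero_scal hs ha t.card (hB.smul m⁻¹)
    rw [← hm, smul_smul, mul_inv_cancel₀ hmpos.ne', one_smul, sum_val hs ha t _ hA] at e
    simp only [fun v => hf.inv (ρ v) L hL] at e
    rw [Finset.sum_const, nsmul_eq_mul, ← hm] at e
    exact (mul_left_cancel₀ hmpos.ne' e).symm

theorem ball_body {r : ℝ} (hr : 0 ≤ r) : Body (closedBall (0 : E) r) :=
  ⟨⟨0, by simpa using hr⟩, isCompact_closedBall _ _, convex_closedBall _ _⟩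

theorem to_ball [Nontrivial E] {f : Set E → ℝ} (hf : Nice f) (hs : ∀ x, f {x} = 0)
    (ha : ∀ K L, Body K → Body L → f (K + L) = f K + f L) {L₀ : Set E} (hL₀ : Body L₀) {r₀ : ℝ}
    (hr₀ : 0 ≤ r₀) (hsub : closedBall 0 r₀ ⊆ L₀) :
    ∃ r ≥ r₀, f (closedBall 0 r) = f L₀ := by
  obtain ⟨R₁, hR₁⟩ := hL₀.2.1.isBounded.exists_norm_le
  set R := max R₁ 0 with hRdef
  have hR0 : 0 ≤ R := le_max_right _ _
  have hLR : L₀ ⊆ closedBall 0 R := fun x hx =>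
    mem_closedBall_zero_iff.mpr ((hR₁ x hx).trans (le_max_left _ _))
  let A : Set ℝ := {r | 0 ≤ r ∧ ∃ L, Body L ∧ closedBall 0 r ⊆ L ∧ L ⊆ closedBall 0 R ∧ f L = f L₀}
  have hAR : ∀ r ∈ A, r ≤ R := by
    rintro r ⟨hr, L, -, h1, h2, -⟩
    obtain ⟨u, hu⟩ := NormedSpace.sphere_nonempty (E := E) (x := 0) (r := r) |>.mpr hr
    have := h2 (h1 (sphere_subset_closedBall hu))
    rw [mem_sphere_zero_iff_norm] at hu
    rw [mem_closedBall_zero_iff, hu] at this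
    exact this
  have hA0 : r₀ ∈ A := ⟨hr₀, L₀, hL₀, hsub, hLR, rfl⟩
  have hbdd : BddAbove A := ⟨R, hAR⟩
  set s := sSup A with hsdef
  have hs0 : r₀ ≤ s := le_csSup hbdd hA0
  have hex : ∀ k : ℕ, ∃ r ∈ A, s - 1 / ((k : ℝ) + 1) < r := fun k =>
    exists_lt_of_lt_csSup ⟨r₀, hA0⟩ (by have : (0 : ℝ) < 1 / ((k : ℝ) + 1) := by positivity
                                        linarith)
  choose r hrA hrs using hex
  choose hr0 L hL h1 h2 h3 using hrA
  have hrle : ∀ k, r k ≤ s := fun k => le_csSup hbdd ⟨hr0 k, L k, hL k, h1 k, h2 k, h3 k⟩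
  have hs00 : 0 ≤ s := hr₀.trans hs0
  refine ⟨s, hs0, ?_⟩
  have t1 := tendsto_one_div_add_atTop_nhds_zero_nat (𝕜 := ℝ)
  have hlim : CLim L (closedBall 0 s) := by
    intro ε hε
    obtain ⟨η, hη, H⟩ := improve hf hs ha hR0 hε
    filter_upwards [t1.eventually (gt_mem_nhds hη), t1.eventually (gt_mem_nhds hε)] with k hk hk'
    have hbound : ∀ x ∈ L k, ‖x‖ < r k + ε := by
      by_contra hcon
      push Not at hcon
      obtain ⟨L', g1, g2, g3, g4⟩ := H (r k) (L k) (hr0 k)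
        (hAR _ ⟨hr0 k, L k, hL k, h1 k, h2 k, h3 k⟩) (hL k) (h1 k) (h2 k) hcon
      have : r k + η ∈ A := ⟨by have := hr0 k; linarith, L', g1, g2, g3, g4.trans (h3 k)⟩
      have := le_csSup hbdd this
      have := hrs k
      linarith
    have gen : ∀ (x : E) (ρ : ℝ), 0 ≤ ρ → ‖x‖ ≤ ρ + ε → ∃ y : E, ‖y‖ ≤ ρ ∧ dist x y ≤ ε := by
      intro x ρ hρ hx
      rcases le_or_gt ‖x‖ ρ with h | h
      · exact ⟨x, h, by simpa using hε.le⟩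
      · have hxp : 0 < ‖x‖ := hρ.trans_lt h
        refine ⟨(ρ / ‖x‖) • x, ?_, ?_⟩
        · rw [norm_smul, Real.norm_of_nonneg (by positivity), div_mul_cancel₀ _ hxp.ne']
        · have : x - (ρ / ‖x‖) • x = (1 - ρ / ‖x‖) • x := by rw [sub_smul, one_smul]
          rw [dist_eq_norm, this, norm_smul, Real.norm_of_nonneg (by
            rw [sub_nonneg, div_le_one hxp]; exact h.le), sub_mul, one_mul,
            div_mul_cancel₀ _ hxp.ne']
          linarith
    constructor
    · intro x hx
      obtain ⟨y, hy, hy'⟩ := gen x s hs00 (by have := hbound x hx; have := hrle k; linarith)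
      exact ⟨y, mem_closedBall_zero_iff.mpr hy, hy'⟩
    · intro x hx
      obtain ⟨y, hy, hy'⟩ := gen x (r k) (hr0 k) (by
        have := mem_closedBall_zero_iff.mp hx; have := hrs k; linarith)
      exact ⟨y, h1 k (mem_closedBall_zero_iff.mpr hy), by rwa [dist_comm]⟩
  have := hf.scont _ _ hL (ball_body hs00) hlim
  simp only [h3] at this
  exact tendsto_nhds_unique tendsto_const_nhds this |>.symm

theorem ball_zero {f : Set E → ℝ} (hf : Nice f) (hs : ∀ x, f {x} = 0)
    (ha : ∀ K L, Body K → Body L → f (K + L) = f K + f L) {r : ℝ} (hr : 0 < r)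
    (h0 : f (closedBall 0 r) = 0) {t : ℝ} (ht : 0 ≤ t) : f (closedBall 0 t) = 0 := by
  have hB := ball_body (E := E) hr.le
  have hq : ∀ k m : ℕ, f (((k : ℝ) / m) • closedBall (0 : E) r) = 0 := by
    intro k m
    rcases Nat.eq_zero_or_pos m with rfl | hm
    · have : ((k : ℝ) / (0 : ℕ)) • closedBall (0 : E) r = {0} := by
        rw [Nat.cast_zero, div_zero, zero_smul_set hB.1, singleton_zero]
      rw [this, hs]
    · have hm' : (m : ℝ) ≠ 0 := by positivity
      have e := zero_scal hs ha m (hB.smul ((k : ℝ) / m))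
      rw [smul_smul, mul_div_cancel₀ _ hm', zero_scal hs ha k hB, h0, mul_zero] at e
      exact (mul_eq_zero.mp e.symm).resolve_left hm'
  have t1 := (tendsto_nat_floor_mul_div_atTop (R := ℝ) (a := t / r) (by positivity)).comp
    tendsto_natCast_atTop_atTop
  have hl := CLim.scale hB.2.1 t1
  have e : (t / r) • closedBall (0 : E) r = closedBall 0 t := by
    rw [smul_closedBall _ _ hr.le, smul_zero, Real.norm_of_nonneg (by positivity),
      div_mul_cancel₀ _ hr.ne']
  rw [e] at hl
  have := hf.scont _ _ (fun m => hB.smul _) (ball_body ht) hl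
  simp only [Function.comp_apply, hq] at this
  exact tendsto_nhds_unique this tendsto_const_nhds

theorem avg_zero [Nontrivial E] {f : Set E → ℝ} (hf : Nice f) (hs : ∀ x, f {x} = 0)
    (ha : ∀ K L, Body K → Body L → f (K + L) = f K + f L) {ι : Type} [Fintype ι]
    (b : OrthonormalBasis ι ℝ E) (hb : f (cube b) = 0) {K : Set E} (hK : Body K) : f K = 0 := by
  have hc := cube_body b
  let v : E := ∑ i, (2⁻¹ : ℝ) • b i
  have hv : ∀ i, ⟪b i, v⟫ = 2⁻¹ := by
    intro i
    classical
    simp [v, inner_sum, inner_smul_right, orthonormal_iff_ite.mp b.orthonormal]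
  obtain ⟨r, hr, hr'⟩ := to_ball hf hs ha (hc.translate (-v)) (r₀ := 1 / 2) (by norm_num) (by
    intro x hx
    refine ⟨v + x, fun i => ?_, by simp⟩
    rw [inner_add_right, hv]
    have h1 := abs_real_inner_le_norm (b i) x
    rw [b.orthonormal.1 i, one_mul] at h1
    have h2 := mem_closedBall_zero_iff.mp hx
    have h3 := abs_le.mp (h1.trans h2)
    constructor <;> linarith [h3.1, h3.2])
  rw [hf.trans _ _ hc, hb] at hr'
  obtain ⟨a, haK⟩ := hK.1
  obtain ⟨s, hs', hs''⟩ := to_ball hf hs ha (hK.translate (-a)) (r₀ := 0) le_rfl (by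
    rw [closedBall_zero, singleton_subset_iff]
    exact ⟨a, haK, by simp⟩)
  rw [hf.trans _ _ hK] at hs''
  rw [← hs'', ball_zero hf hs ha (by linarith) hr' hs']

theorem zprop (n : ℕ) : ZProp n := by
  induction n using Nat.strong_induction_on with
  | _ n ih =>
    intro E _ _ _ hE f hf b hb K hK
    rcases Nat.eq_zero_or_pos n with rfl | hn
    · have : Subsingleton E := Module.finrank_zero_iff.mp hE
      rw [Subsingleton.eq_univ_of_nonempty hK.1,
        ← Subsingleton.eq_univ_of_nonempty (cube_body b).1, hb]
    · have h0 : 0 < Module.finrank ℝ E := by omega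
      have : Nontrivial E := Module.finrank_pos_iff.mp h0
      have h2 : ∀ K, Body K → f ((2 : ℝ) • K) = 2 * f K := fun K hK =>
        homog hf h0 (fun U hU0 hU1 F G hF hG => orth_zero ih hE hf b hb hU0 hU1 hF hG) hK
      exact avg_zero hf (hf.cut.singleton h0) (fun K L hK hL => additive hf h0 h2 hK hL) b hb hK

end Avg
end Hadwiger

set_option linter.unusedSectionVars false

namespace Hadwiger

open scoped Pointwise RealInnerProductSpace Topology

section Vol
variable {n : ℕ}

theorem shrink_subset {K L : Set (EuclideanSpace ℝ (Fin n))} (hK : Body K) (hL : Body L)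
    {x₀ : EuclideanSpace ℝ (Fin n)} {r ε : ℝ} (hr : 0 < r) (hε : 0 < ε) (hεr : ε < r)
    (hball : closedBall x₀ r ⊆ L) (hcl : Close ε K L) :
    AffineMap.homothety x₀ (1 - ε / r) '' L ⊆ K := by
  rintro _ ⟨z, hz, rfl⟩
  set y := AffineMap.homothety x₀ (1 - ε / r) z with hy
  have hy' : y = (1 - ε / r) • z + (ε / r) • x₀ := by
    rw [hy, AffineMap.homothety_apply, vsub_eq_sub, vadd_eq_add, smul_sub, sub_smul _ _ x₀, one_smul]
    abel
  by_contra hcon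
  obtain ⟨l, u, h1, h2⟩ := geometric_hahn_banach_closed_point hK.2.2 hK.2.1.isClosed hcon
  obtain ⟨p, rfl⟩ : ∃ p, innerSL ℝ p = l :=
    ⟨(InnerProductSpace.toDual ℝ _).symm l, by ext x; simp⟩
  simp only [innerSL_apply_apply] at h1 h2
  have hp : p ≠ 0 := by
    rintro rfl
    obtain ⟨z, hz⟩ := hK.1
    have := h1 z hz
    simp at this h2
    linarith
  have hpn : 0 < ‖p‖ := norm_pos_iff.mpr hp
  have hn1 : ‖‖p‖⁻¹ • p‖ = 1 := by rw [norm_smul, norm_inv, norm_norm, inv_mul_cancel₀ hpn.ne']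
  have hin : ⟪p, ‖p‖⁻¹ • p⟫ = ‖p‖ := by
    rw [inner_smul_right, real_inner_self_eq_norm_sq]; field_simp
  generalize ‖p‖⁻¹ • p = û at hn1 hin
  have hmem : y + ε • û ∈ L := by
    have h3 : x₀ + r • û ∈ L := hball (by
      rw [mem_closedBall, dist_eq_norm, add_sub_cancel_left, norm_smul, hn1,
        Real.norm_of_nonneg hr.le, mul_one])
    have h4 : ε / r ≤ 1 := (div_le_one hr).mpr hεr.le
    have h01 : (0 : ℝ) ≤ 1 - ε / r := by linarith
    have h02 : (0 : ℝ) ≤ ε / r := by positivity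
    have := hL.2.2 hz h3 h01 h02 (by ring)
    convert this using 1
    rw [hy', smul_add, smul_smul, div_mul_cancel₀ _ hr.ne', add_assoc]
  obtain ⟨a, haK, had⟩ := hcl.2 _ hmem
  have h5 := h1 a haK
  have h6 : ⟪p, y + ε • û - a⟫ ≤ ‖p‖ * ε := by
    refine (real_inner_le_norm _ _).trans ?_
    rw [dist_comm, dist_eq_norm] at had
    gcongr
  rw [inner_sub_right, inner_add_right, inner_smul_right, hin] at h6
  nlinarith

theorem vol_cont (K : ℕ → Set (EuclideanSpace ℝ (Fin n))) (L : Set (EuclideanSpace ℝ (Fin n)))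
    (hK : ∀ m, Body (K m)) (hL : Body L) (hl : ∀ ε > 0, ∀ᶠ m in atTop, Close ε (K m) L) :
    Tendsto (fun m => (volume (K m)).toReal) atTop (𝓝 (volume L).toReal) := by
  rw [tendsto_order]
  constructor
  · intro a ha
    rcases (interior L).eq_empty_or_nonempty with hi | ⟨x₀, hx₀⟩
    · have h0 : volume L = 0 := by
        have := hL.2.2.addHaar_frontier volume
        rwa [hL.2.1.isClosed.frontier_eq, hi, sdiff_empty] at this
      rw [h0] at ha
      exact Eventually.of_forall fun m => lt_of_lt_of_le (by simpa using ha) ENNReal.toReal_nonneg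
    · obtain ⟨r, hr, hball⟩ := Metric.nhds_basis_closedBall.mem_iff.mp
        (mem_interior_iff_mem_nhds.mp hx₀)
      have hc : ContinuousAt (fun ε : ℝ => |(1 - ε / r) ^ n| * (volume L).toReal) 0 := by fun_prop
      have h1 := hc.eventually (lt_mem_nhds (a := a) (by simpa using ha))
      obtain ⟨δ, hδ, hδ'⟩ := Metric.eventually_nhds_iff.mp h1
      set ε := min (δ / 2) (r / 2) with hε
      have hε0 : 0 < ε := by positivity
      have hε1 : ε < δ := lt_of_le_of_lt (min_le_left _ _) (by linarith)
      have hε2 : ε < r := lt_of_le_of_lt (min_le_right _ _) (by linarith)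
      have h2 := hδ' (y := ε) (by rw [Real.dist_eq, sub_zero, abs_of_pos hε0]; exact hε1)
      filter_upwards [hl ε hε0] with m hm
      refine h2.trans_le ?_
      have h3 := measure_mono (μ := volume) (shrink_subset (hK m) hL hr hε0 hε2 hball hm)
      rw [Measure.addHaar_image_homothety, finrank_euclideanSpace_fin] at h3
      have h4 := ENNReal.toReal_mono (hK m).2.1.measure_lt_top.ne h3
      rw [ENNReal.toReal_mul, ENNReal.toReal_ofReal (abs_nonneg _)] at h4
      exact h4
  · intro a ha
    have hL1 : volume L ≠ ⊤ := hL.2.1.measure_lt_top.ne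
    have ha0 : 0 < a := lt_of_le_of_lt ENNReal.toReal_nonneg ha
    have h1 : volume L < ENNReal.ofReal a := (ENNReal.lt_ofReal_iff_toReal_lt hL1).mpr ha
    have h2 := (tendsto_measure_cthickening_of_isCompact (μ := volume) hL.2.1).eventually
      (gt_mem_nhds h1)
    obtain ⟨δ, hδ, hδ'⟩ := Metric.eventually_nhds_iff.mp h2
    have h3 := hδ' (y := δ / 2) (by rw [Real.dist_eq, sub_zero, abs_of_pos (by linarith)]; linarith)
    filter_upwards [hl (δ / 2) (by linarith)] with m hm
    have h4 : K m ⊆ cthickening (δ / 2) L := by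
      intro x hx
      obtain ⟨y, hy, hxy⟩ := hm.1 x hx
      exact mem_cthickening_of_dist_le x y _ _ hy hxy
    exact (ENNReal.lt_ofReal_iff_toReal_lt (hK m).2.1.measure_lt_top.ne).mp
      ((measure_mono h4).trans_lt h3)

theorem affineSpan_ne_top {K : Set (EuclideanSpace ℝ (Fin n))} 
    {l : EuclideanSpace ℝ (Fin n) →L[ℝ] ℝ} {c : ℝ} (hl : l ≠ 0) (h : ∀ x ∈ K, l x = c) :
    affineSpan ℝ K ≠ ⊤ := by
  intro ht
  have h1 : vectorSpan ℝ K = ⊤ := by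
    rw [← direction_affineSpan, ht, AffineSubspace.direction_top]
  have h2 : vectorSpan ℝ K ≤ LinearMap.ker l.toLinearMap := by
    rw [vectorSpan_def, Submodule.span_le]
    rintro _ ⟨x, hx, y, hy, rfl⟩
    simp [h x hx, h y hy]
  rw [h1, top_le_iff, LinearMap.ker_eq_top] at h2
  apply hl
  ext x
  exact congrArg (fun m : EuclideanSpace ℝ (Fin n) →ₗ[ℝ] ℝ => m x) h2

theorem vol_iso (g : EuclideanSpace ℝ (Fin n) ≃ₗᵢ[ℝ] EuclideanSpace ℝ (Fin n))
    (K : Set (EuclideanSpace ℝ (Fin n))) (hK : Body K) : volume (g '' K) = volume K := by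
  rw [LinearIsometryEquiv.image_eq_preimage_symm]
  exact g.symm.measurePreserving.measure_preimage hK.2.1.measurableSet.nullMeasurableSet

theorem vol_cube (b : OrthonormalBasis (Fin n) ℝ (EuclideanSpace ℝ (Fin n))) :
    volume (cube b) = 1 := by
  rw [← b.volume_parallelepiped]
  congr 1
  ext x
  rw [mem_parallelepiped_iff]
  constructor
  · intro hx
    exact ⟨fun i => ⟪b i, x⟫, ⟨fun i => (hx i).1, fun i => (hx i).2⟩, (b.sum_repr' x).symm⟩
  · rintro ⟨t, ht, rfl⟩ i
    rw [b.orthonormal.inner_right_fintype]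
    exact ⟨ht.1 i, ht.2 i⟩

theorem final (f : Set (EuclideanSpace ℝ (Fin n)) → ℝ)
    (hempty : f ∅ = 0)
    (hval : ∀ K L : Set (EuclideanSpace ℝ (Fin n)), Body K → Body L →
      Convex ℝ (K ∪ L) → f (K ∪ L) = f K + f L - f (K ∩ L))
    (hcont : ∀ (K : ℕ → Set (EuclideanSpace ℝ (Fin n))) (L : Set (EuclideanSpace ℝ (Fin n))),
      (∀ m, Body (K m)) → Body L →
      Tendsto (fun m => Metric.hausdorffDist (K m) L) atTop (nhds 0) →
      Tendsto (fun m => f (K m)) atTop (nhds (f L)))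
    (hinv : ∀ (g : EuclideanSpace ℝ (Fin n) ≃ᵢ EuclideanSpace ℝ (Fin n))
      (K : Set (EuclideanSpace ℝ (Fin n))), Body K → f (g '' K) = f K)
    (hsimple : ∀ K : Set (EuclideanSpace ℝ (Fin n)), Body K →
      affineSpan ℝ K ≠ ⊤ → f K = 0) :
    ∃ c : ℝ, ∀ K : Set (EuclideanSpace ℝ (Fin n)), Body K →
      f K = c * (volume K).toReal := by
  let b := EuclideanSpace.basisFun (Fin n) ℝ
  refine ⟨f (cube b), fun K hK => ?_⟩
  set c := f (cube b) with hc
  have hN : Nice (fun K => f K - c * (volume K).toReal) := by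
    constructor
    · simp [hempty]
    · intro K L hK hL h
      have e : (volume (K ∪ L)).toReal + (volume (K ∩ L)).toReal =
          (volume K).toReal + (volume L).toReal :=
        measureReal_union_add_inter (μ := volume) hL.2.1.measurableSet
          hK.2.1.measure_lt_top.ne hL.2.1.measure_lt_top.ne
      rw [hval K L hK hL h]
      linear_combination (-c) * e
    · intro K hK l a hl h
      have h1 := affineSpan_ne_top hl h
      have h2 : volume K = 0 :=
        measure_mono_null (subset_affineSpan ℝ K) (Measure.addHaar_affineSubspace volume _ h1)
      rw [hsimple K hK h1, h2]; simp
    · intro K L hK hL h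
      refine (hcont K L hK hL ?_).sub ((vol_cont K L hK hL h).const_mul c)
      rw [Metric.tendsto_nhds]
      intro ε hε
      filter_upwards [h (ε / 2) (by linarith)] with m hm
      have := hausdorffDist_le_of_mem_dist (by linarith) hm.1 (fun y hy => by
        obtain ⟨x, hx, hxy⟩ := hm.2 y hy
        exact ⟨x, hx, by rwa [dist_comm]⟩)
      rw [Real.dist_eq, sub_zero, abs_of_nonneg hausdorffDist_nonneg]
      linarith
    · intro g K hK
      rw [vol_iso g K hK, ← hinv g.toIsometryEquiv K hK]
      rfl
    · intro v K hK
      have := hinv (IsometryEquiv.addLeft v) K hK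
      have h2 : volume ((fun x => v + x) '' K) = volume K := by
        rw [image_add_left, measure_preimage_add]
      rw [h2, ← this]
      rfl
  have h0 : (fun K => f K - c * (volume K).toReal) (cube b) = 0 := by
    simp only [vol_cube b, ENNReal.toReal_one, mul_one, hc, sub_self]
  have := zprop n _ (finrank_euclideanSpace_fin) _ hN b h0 K hK
  linarith

end Vol
end Hadwiger

/-- Hadwiger's theorem, simple-valuation form: a valuation on the convex
bodies of `ℝ^n` that is continuous for the Hausdorff metric, invariant under all
isometries, and simple (vanishing on bodies of dimension `< n`), is a constant
multiple of the Lebesgue volume. -/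
theorem stmt8 {n : ℕ} (f : Set (EuclideanSpace ℝ (Fin n)) → ℝ)
    (hempty : f ∅ = 0)
    (hval : ∀ K L : Set (EuclideanSpace ℝ (Fin n)), IsConvexBody K → IsConvexBody L →
      Convex ℝ (K ∪ L) → f (K ∪ L) = f K + f L - f (K ∩ L))
    (hcont : ∀ (K : ℕ → Set (EuclideanSpace ℝ (Fin n))) (L : Set (EuclideanSpace ℝ (Fin n))),
      (∀ m, IsConvexBody (K m)) → IsConvexBody L →
      Tendsto (fun m => Metric.hausdorffDist (K m) L) atTop (nhds 0) →
      Tendsto (fun m => f (K m)) atTop (nhds (f L)))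
    (hinv : ∀ (g : EuclideanSpace ℝ (Fin n) ≃ᵢ EuclideanSpace ℝ (Fin n))
      (K : Set (EuclideanSpace ℝ (Fin n))), IsConvexBody K → f (g '' K) = f K)
    (hsimple : ∀ K : Set (EuclideanSpace ℝ (Fin n)), IsConvexBody K →
      affineSpan ℝ K ≠ ⊤ → f K = 0) :
    ∃ c : ℝ, ∀ K : Set (EuclideanSpace ℝ (Fin n)), IsConvexBody K →
      f K = c * (volume K).toReal := by
  exact Hadwiger.final f hempty hval hcont hinv hsimple
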